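/- arXiv:1810.09129 — 2 statements merged into one kernel-verified Lean document; each statement's English description precedes it below -/
import Mathlib

section
/- Let L be a nilpotent Lie superalgebra of dimension (5 | 0) with dim L' = 2 and L' = Z(L), over a field of characteristic ≠ 2,3. Then L ≅ L_{5,0}^2, the Lie algebra with basis x, y, z, v, w and nonzero brackets [x,y] = v, [y,z] = w. -/
open Module Function TensorProduct

/-- A Lie superalgebra over a field `K`, encoded via a grading involution `J`
(the even part is the `+1`-eigenspace, the odd part the `-1`-eigenspace),
a bilinear bracket `br` satisfying graded skew-symmetry and the graded
Jacobi identity on homogeneous elements. -/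
structure SuperLie (K : Type) [Field K] : Type 1 where
  carrier : Type
  [acg : AddCommGroup carrier]
  [mod : Module K carrier]
  J : carrier →ₗ[K] carrier
  br : carrier →ₗ[K] carrier →ₗ[K] carrier
  J_inv : ∀ x, J (J x) = x
  J_br : ∀ x y, J (br x y) = br (J x) (J y)
  skew_e : ∀ x y, J x = x → br x y = - br y x
  skew_o : ∀ x y, J x = -x → J y = -y → br x y = br y x
  jacobi : ∀ (a b c : Bool) (x y z : carrier),
    J x = (if a then -x else x) → J y = (if b then -y else y) →
    J z = (if c then -z else z) →
    (if a && c then (-1 : K) else 1) • br x (br y z)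
      + (if b && a then (-1 : K) else 1) • br y (br z x)
      + (if c && b then (-1 : K) else 1) • br z (br x y) = 0

attribute [instance] SuperLie.acg SuperLie.mod

namespace SuperLie

variable {K : Type} [Field K]

/-- The even part `L₀`. -/
def evenPart (A : SuperLie K) : Submodule K A.carrier :=
  LinearMap.ker (A.J - LinearMap.id)

/-- The odd part `L₁`. -/
def oddPart (A : SuperLie K) : Submodule K A.carrier :=
  LinearMap.ker (A.J + LinearMap.id)

/-- The center `Z(L) = {z | [z,x] = 0 for all x}`. -/
def center (A : SuperLie K) : Submodule K A.carrier :=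
  ⨅ y, LinearMap.ker (A.br.flip y)

/-- The derived subalgebra `L' = [L,L]`. -/
def derived (A : SuperLie K) : Submodule K A.carrier :=
  Submodule.span K {z | ∃ x y, A.br x y = z}

/-- The descending central series `C⁰(L) = L`, `C^{k+1}(L) = [C^k(L), L]`. -/
def lcs (A : SuperLie K) : ℕ → Submodule K A.carrier
  | 0 => ⊤
  | (k+1) => Submodule.span K {z | ∃ x ∈ lcs A k, ∃ y, A.br x y = z}

/-- The second center `Z₂(L)`: those `x` with `[x,y] ∈ Z(L)` for all `y`. -/
def Z2 (A : SuperLie K) : Submodule K A.carrier :=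
  ⨅ y, Submodule.comap (A.br.flip y) A.center

/-- Nilpotency: the descending central series terminates at zero. -/
def IsNilpotent (A : SuperLie K) : Prop := ∃ k, A.lcs k = ⊥

/-- Abelian: identically vanishing bracket. -/
def IsAbelian (A : SuperLie K) : Prop := ∀ x y, A.br x y = 0

/-- A homomorphism of Lie superalgebras: an even linear map commuting with the
grading and preserving brackets. -/
structure Hom (A B : SuperLie K) where
  toLin : A.carrier →ₗ[K] B.carrier
  map_J : ∀ x, toLin (A.J x) = B.J (toLin x)
  map_br : ∀ x y, toLin (A.br x y) = B.br (toLin x) (toLin y)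

/-- The dimension of the Schur multiplier `M(A)`, characterized as the maximal
dimension of the kernel of a stem extension `0 → M → B → A → 0`
(i.e. `M = ker f ⊆ Z(B) ∩ B'`); a stem extension of maximal dimension is a
stem cover, whose kernel is isomorphic to the Schur multiplier
`M(A) = ([F,F] ∩ R)/[F,R]` coming from any free presentation `0 → R → F → A → 0`. -/
noncomputable def multDim (A : SuperLie K) : ℕ :=
  sSup {d | ∃ (B : SuperLie K) (f : Hom B A),
    Surjective f.toLin ∧
    LinearMap.ker f.toLin ≤ B.center ⊓ B.derived ∧
    finrank K (LinearMap.ker f.toLin) = d}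

/-- `A ≅ H(0,1)`: basis `z` (even), `y` (odd), `[y,y] = z`, `z` central. -/
def IsH01 (A : SuperLie K) : Prop :=
  ∃ z y : A.carrier, z ∈ A.evenPart ∧ y ∈ A.oddPart ∧
    LinearIndependent K ![z, y] ∧
    Submodule.span K ({z, y} : Set A.carrier) = ⊤ ∧
    A.br y y = z ∧ z ∈ A.center

/-- `A ≅ H(1,0)`: the purely even 3-dimensional Heisenberg algebra. -/
def IsH10 (A : SuperLie K) : Prop :=
  ∃ x y z : A.carrier, x ∈ A.evenPart ∧ y ∈ A.evenPart ∧ z ∈ A.evenPart ∧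
    LinearIndependent K ![x, y, z] ∧
    Submodule.span K ({x, y, z} : Set A.carrier) = ⊤ ∧
    A.br x y = z ∧ z ∈ A.center

/-- `A ≅ H(0,2)`: even basis `{z}`, odd basis `{y₁,y₂}`, `[yᵢ,yᵢ] = z`. -/
def IsH02 (A : SuperLie K) : Prop :=
  ∃ z y₁ y₂ : A.carrier, z ∈ A.evenPart ∧ y₁ ∈ A.oddPart ∧ y₂ ∈ A.oddPart ∧
    LinearIndependent K ![z, y₁, y₂] ∧
    Submodule.span K ({z, y₁, y₂} : Set A.carrier) = ⊤ ∧
    A.br y₁ y₁ = z ∧ A.br y₂ y₂ = z ∧ A.br y₁ y₂ = 0 ∧ z ∈ A.center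

/-- `A ≅ H₁`: even basis `{x}`, odd basis `{y,z}`, `[x,y] = z`, `z` central. -/
def IsHodd1 (A : SuperLie K) : Prop :=
  ∃ x y z : A.carrier, x ∈ A.evenPart ∧ y ∈ A.oddPart ∧ z ∈ A.oddPart ∧
    LinearIndependent K ![x, y, z] ∧
    Submodule.span K ({x, y, z} : Set A.carrier) = ⊤ ∧
    A.br x y = z ∧ A.br y y = 0 ∧ z ∈ A.center

/-- `A ≅ H(p,q)`: the special Heisenberg Lie superalgebra with even center,
of superdimension `(2p+1 | q)`: even basis `x₁,…,x_{2p}, z` with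
`[xᵢ, x_{p+i}] = z`, odd basis `y₁,…,y_q` with `[yⱼ,yⱼ] = z`, `z` central. -/
def IsHeisEven (A : SuperLie K) (p q : ℕ) : Prop :=
  ∃ (x : Fin (2*p) → A.carrier) (y : Fin q → A.carrier) (z : A.carrier),
    (∀ i, x i ∈ A.evenPart) ∧ (∀ j, y j ∈ A.oddPart) ∧ z ∈ A.evenPart ∧
    LinearIndependent K (Sum.elim x (Sum.elim y (fun _ : Fin 1 => z))) ∧
    Submodule.span K (Set.range (Sum.elim x (Sum.elim y (fun _ : Fin 1 => z)))) = ⊤ ∧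
    (∀ i j : Fin (2*p), A.br (x i) (x j) =
      if (j : ℕ) = (i : ℕ) + p then z else if (i : ℕ) = (j : ℕ) + p then -z else 0) ∧
    (∀ i j : Fin q, A.br (y i) (y j) = if i = j then z else 0) ∧
    (∀ i j, A.br (x i) (y j) = 0) ∧ z ∈ A.center

/-- `A ≅ H_p`: the special Heisenberg Lie superalgebra with odd center, of
superdimension `(p | p+1)`: even basis `x₁,…,x_p`, odd basis `y₁,…,y_p, z`,
with `[xᵢ, yᵢ] = z` and `z` central. -/
def IsHeisOdd (A : SuperLie K) (p : ℕ) : Prop :=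
  ∃ (x : Fin p → A.carrier) (y : Fin p → A.carrier) (z : A.carrier),
    (∀ i, x i ∈ A.evenPart) ∧ (∀ j, y j ∈ A.oddPart) ∧ z ∈ A.oddPart ∧
    LinearIndependent K (Sum.elim x (Sum.elim y (fun _ : Fin 1 => z))) ∧
    Submodule.span K (Set.range (Sum.elim x (Sum.elim y (fun _ : Fin 1 => z)))) = ⊤ ∧
    (∀ i j : Fin p, A.br (x i) (x j) = 0) ∧
    (∀ i j : Fin p, A.br (y i) (y j) = 0) ∧
    (∀ i j : Fin p, A.br (x i) (y j) = if i = j then z else 0) ∧ z ∈ A.center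

/-- `A ≅ H(p,q) ⊕ A(a|b)`: direct sum of the special Heisenberg Lie
superalgebra with even center and an abelian superalgebra of superdimension
`(a|b)` (central basis vectors `u₁,…,u_a` even and `v₁,…,v_b` odd). -/
def IsHeisEvenSum (A : SuperLie K) (p q a b : ℕ) : Prop :=
  ∃ (x : Fin (2*p) → A.carrier) (y : Fin q → A.carrier) (z : A.carrier)
    (u : Fin a → A.carrier) (v : Fin b → A.carrier),
    (∀ i, x i ∈ A.evenPart) ∧ (∀ j, y j ∈ A.oddPart) ∧ z ∈ A.evenPart ∧
    (∀ i, u i ∈ A.evenPart) ∧ (∀ j, v j ∈ A.oddPart) ∧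
    LinearIndependent K
      (Sum.elim x (Sum.elim y (Sum.elim (fun _ : Fin 1 => z) (Sum.elim u v)))) ∧
    Submodule.span K (Set.range
      (Sum.elim x (Sum.elim y (Sum.elim (fun _ : Fin 1 => z) (Sum.elim u v))))) = ⊤ ∧
    (∀ i j : Fin (2*p), A.br (x i) (x j) =
      if (j : ℕ) = (i : ℕ) + p then z else if (i : ℕ) = (j : ℕ) + p then -z else 0) ∧
    (∀ i j : Fin q, A.br (y i) (y j) = if i = j then z else 0) ∧
    (∀ i j, A.br (x i) (y j) = 0) ∧ z ∈ A.center ∧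
    (∀ i, u i ∈ A.center) ∧ (∀ j, v j ∈ A.center)

/-- `A ≅ H_p ⊕ A(a|b)`: direct sum of the special Heisenberg Lie superalgebra
with odd center and an abelian superalgebra of superdimension `(a|b)`. -/
def IsHeisOddSum (A : SuperLie K) (p a b : ℕ) : Prop :=
  ∃ (x : Fin p → A.carrier) (y : Fin p → A.carrier) (z : A.carrier)
    (u : Fin a → A.carrier) (v : Fin b → A.carrier),
    (∀ i, x i ∈ A.evenPart) ∧ (∀ j, y j ∈ A.oddPart) ∧ z ∈ A.oddPart ∧
    (∀ i, u i ∈ A.evenPart) ∧ (∀ j, v j ∈ A.oddPart) ∧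
    LinearIndependent K
      (Sum.elim x (Sum.elim y (Sum.elim (fun _ : Fin 1 => z) (Sum.elim u v)))) ∧
    Submodule.span K (Set.range
      (Sum.elim x (Sum.elim y (Sum.elim (fun _ : Fin 1 => z) (Sum.elim u v))))) = ⊤ ∧
    (∀ i j : Fin p, A.br (x i) (x j) = 0) ∧
    (∀ i j : Fin p, A.br (y i) (y j) = 0) ∧
    (∀ i j : Fin p, A.br (x i) (y j) = if i = j then z else 0) ∧ z ∈ A.center ∧
    (∀ i, u i ∈ A.center) ∧ (∀ j, v j ∈ A.center)

/-- `A ≅ L_{4,0}`: purely even filiform algebra, basis `x,y,z,w`,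
`[x,y] = z`, `[y,z] = w`, all other basis brackets zero. -/
def IsL40 (A : SuperLie K) : Prop :=
  ∃ x y z w : A.carrier,
    x ∈ A.evenPart ∧ y ∈ A.evenPart ∧ z ∈ A.evenPart ∧ w ∈ A.evenPart ∧
    LinearIndependent K ![x, y, z, w] ∧
    Submodule.span K ({x, y, z, w} : Set A.carrier) = ⊤ ∧
    A.br x y = z ∧ A.br y z = w ∧ A.br x z = 0 ∧
    A.br x w = 0 ∧ A.br y w = 0 ∧ A.br z w = 0

/-- `A ≅ L_{5,0}^2`: purely even, basis `x,y,z,v,w`, `[x,y] = v`, `[y,z] = w`,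
with `v, w` central and all other basis brackets zero. -/
def IsL502 (A : SuperLie K) : Prop :=
  ∃ x y z v w : A.carrier,
    x ∈ A.evenPart ∧ y ∈ A.evenPart ∧ z ∈ A.evenPart ∧
    v ∈ A.evenPart ∧ w ∈ A.evenPart ∧
    LinearIndependent K ![x, y, z, v, w] ∧
    Submodule.span K ({x, y, z, v, w} : Set A.carrier) = ⊤ ∧
    A.br x y = v ∧ A.br y z = w ∧ A.br x z = 0 ∧
    v ∈ A.center ∧ w ∈ A.center

end SuperLie

open SuperLie

/-!
If `L' ≤ Z(L)`, the bracket is determined by its restriction to a complement `C` of `L'`, here of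
dimension 3. An alternating map on a 3-dimensional space factors through the cross product by a
linear map `φ`, and `φ` cannot be injective when the values span at most a plane. A nonzero `n` with
`φ n = 0` is itself a cross product of two independent vectors `x` and `z`, so `[x, z] = 0`. Any `y`
completing them to a basis of `C` then gives the basis `x, y, z, [x, y], [y, z]` of `L`.
-/

section CrossProduct

open scoped Matrix

variable {K : Type*} [Field K]

theorem exists_crossProduct_eq (n : Fin 3 → K) : ∃ x z, x ⨯₃ z = n := by
  by_cases h : n 0 = 0
  · refine ⟨![1, 0, 0], ![0, n 2, -n 1], ?_⟩
    ext i
    fin_cases i <;> simp [cross_apply, h]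
  · refine ⟨![-(n 1 / n 0), 1, 0], ![-n 2, 0, n 0], ?_⟩
    ext i
    fin_cases i <;> simp [cross_apply, h]

theorem exists_basis_crossProduct_eq {n : Fin 3 → K} (hn : n ≠ 0) :
    ∃ e : Basis (Fin 3) K (Fin 3 → K), e 0 ⨯₃ e 2 = n := by
  obtain ⟨x, z, hxz⟩ := exists_crossProduct_eq n
  obtain ⟨y, hy⟩ : ∃ y, y ⬝ᵥ n ≠ 0 := by
    by_contra! h
    exact hn (dotProduct_eq_zero _ fun y => by rw [dotProduct_comm, h])
  have hdet : Matrix.det ![x, y, z] = -(y ⬝ᵥ n) := by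
    rw [← triple_product_eq_det, triple_product_permutation, ← cross_anticomm, dotProduct_neg, hxz]
  have hli : LinearIndependent K ![x, y, z] :=
    Matrix.linearIndependent_rows_of_det_ne_zero (A := ![x, y, z]) (by simpa [hdet] using hy)
  exact ⟨basisOfLinearIndependentOfCardEqFinrank hli (by simp), by simpa using hxz⟩

end CrossProduct

section IsAlt

variable {R V W : Type*} [CommRing R] [AddCommGroup V] [Module R V] [AddCommGroup W] [Module R W]
  {B : V →ₗ[R] V →ₗ[R] W}

theorem map₂_top_top_eq_of_sup_ker_eq_top (hB : B.IsRefl)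
    {C : Submodule R V} (hC : C ⊔ B.ker = ⊤) :
    Submodule.map₂ B ⊤ ⊤ = Submodule.map₂ B C C := by
  have hleft (p : Submodule R V) : Submodule.map₂ B B.ker p = ⊥ :=
    eq_bot_iff.2 <| Submodule.map₂_le.2 fun u hu v _ => by simp [LinearMap.mem_ker.1 hu]
  have hright (p : Submodule R V) : Submodule.map₂ B p B.ker = ⊥ :=
    eq_bot_iff.2 <| Submodule.map₂_le.2 fun u _ v hv =>
      hB v u (by simp [LinearMap.mem_ker.1 hv])
  rw [← hC, Submodule.map₂_sup_left, Submodule.map₂_sup_right, hleft, hright, sup_bot_eq,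
    sup_bot_eq]

theorem map₂_top_top_eq_span_pair_of_isAlt (hB : B.IsAlt)
    (e : Basis (Fin 3) R V) (he : B (e 0) (e 2) = 0) :
    Submodule.map₂ B ⊤ ⊤ = Submodule.span R {B (e 0) (e 1), B (e 1) (e 2)} := by
  apply le_antisymm
  · have hxy : B (e 0) (e 1) ∈ Submodule.span R {B (e 0) (e 1), B (e 1) (e 2)} :=
      Submodule.mem_span_of_mem (by simp)
    have hyz : B (e 1) (e 2) ∈ Submodule.span R {B (e 0) (e 1), B (e 1) (e 2)} :=
      Submodule.mem_span_of_mem (by simp)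
    rw [← e.span_eq, Submodule.map₂_span_span, Submodule.span_le]
    rintro _ ⟨_, ⟨i, rfl⟩, _, ⟨j, rfl⟩, rfl⟩
    fin_cases i <;> fin_cases j <;>
      simp [hB.self_eq_zero, he, hB.eq_iff.1 he, ← hB.neg (e 0) (e 1), ← hB.neg (e 1) (e 2),
        hxy, hyz]
  · rw [Submodule.span_le]
    rintro _ (rfl | rfl) <;> exact Submodule.apply_mem_map₂ _ trivial trivial

open scoped Matrix in
theorem exists_apply_eq_map_crossProduct_of_isAlt (hB : B.IsAlt)
    (b : Basis (Fin 3) R V) :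
    ∃ φ : (Fin 3 → R) →ₗ[R] W, ∀ u v, B u v = φ (b.equivFun u ⨯₃ b.equivFun v) := by
  refine ⟨Fintype.linearCombination R ![B (b 1) (b 2), B (b 2) (b 0), B (b 0) (b 1)],
    fun u v => ?_⟩
  nth_rw 1 [← b.sum_equivFun u, ← b.sum_equivFun v]
  simp only [Fin.sum_univ_three, map_add, map_smul, LinearMap.add_apply, LinearMap.smul_apply,
    hB.self_eq_zero, ← hB.neg (b 0) (b 1), ← hB.neg (b 1) (b 2), ← hB.neg (b 2) (b 0),
    Fintype.linearCombination_apply, cross_apply, Matrix.cons_val]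
  module

theorem exists_basis_apply_eq_zero_of_isAlt {K : Type*} [Field K] [Module K V] [Module K W]
    {B : V →ₗ[K] V →ₗ[K] W} (hB : B.IsAlt)
    (hV : finrank K V = 3) (hW : finrank K (Submodule.map₂ B ⊤ ⊤) < 3) :
    ∃ e : Basis (Fin 3) K V, B (e 0) (e 2) = 0 := by
  have : FiniteDimensional K V := .of_finrank_pos (by omega)
  have : FiniteDimensional K (Submodule.map₂ B ⊤ ⊤) :=
    .of_fg (.map₂ B Module.Finite.fg_top Module.Finite.fg_top)
  let b := finBasisOfFinrankEq K V hV
  obtain ⟨φ, hφ⟩ := exists_apply_eq_map_crossProduct_of_isAlt hB b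
  have hrange : φ.range ≤ Submodule.map₂ B ⊤ ⊤ := by
    rintro _ ⟨n, rfl⟩
    obtain ⟨x, z, rfl⟩ := exists_crossProduct_eq n
    have hmem : B (b.equivFun.symm x) (b.equivFun.symm z) ∈ Submodule.map₂ B ⊤ ⊤ :=
      Submodule.apply_mem_map₂ B trivial trivial
    rwa [hφ, LinearEquiv.apply_symm_apply, LinearEquiv.apply_symm_apply] at hmem
  have hker : φ.ker ≠ ⊥ := by
    intro h
    have hrank := LinearMap.finrank_range_of_inj (LinearMap.ker_eq_bot.1 h)
    have hle := Submodule.finrank_mono hrange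
    simp only [finrank_fin_fun] at hrank
    omega
  obtain ⟨n, hn, hn0⟩ := Submodule.exists_mem_ne_zero_of_ne_bot hker
  obtain ⟨e, he⟩ := exists_basis_crossProduct_eq hn0
  refine ⟨e.map b.equivFun.symm, ?_⟩
  rw [hφ, Basis.map_apply, Basis.map_apply, LinearEquiv.apply_symm_apply,
    LinearEquiv.apply_symm_apply, he, LinearMap.mem_ker.1 hn]

end IsAlt

namespace SuperLie

variable {K : Type} [Field K] {A : SuperLie K}

theorem derived_eq_map₂ : A.derived = Submodule.map₂ A.br ⊤ ⊤ := by
  simp [derived, Submodule.map₂_eq_span_image2, Set.image2]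

theorem center_eq_ker_br : A.center = A.br.ker := by
  ext z
  simp [center, LinearMap.ext_iff]

theorem J_eq_self_of_oddPart_eq_bot (hodd : A.oddPart = ⊥) (x : A.carrier) : A.J x = x := by
  have hx : A.J x - x ∈ A.oddPart := by simp [oddPart, A.J_inv]
  rwa [hodd, Submodule.mem_bot, sub_eq_zero] at hx

theorem evenPart_eq_top_of_oddPart_eq_bot (hodd : A.oddPart = ⊥) : A.evenPart = ⊤ :=
  eq_top_iff.2 fun x _ => by simp [evenPart, J_eq_self_of_oddPart_eq_bot hodd]

theorem isAlt_br_of_oddPart_eq_bot (h2 : (2 : K) ≠ 0) (hodd : A.oddPart = ⊥) : A.br.IsAlt := by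
  intro x
  have hskew : A.br x x = -A.br x x := A.skew_e x x (J_eq_self_of_oddPart_eq_bot hodd x)
  have htwo : (2 : K) • A.br x x = 0 := by rw [two_smul, add_eq_zero_iff_eq_neg, ← hskew]
  exact (smul_eq_zero.1 htwo).resolve_left h2

theorem exists_span_triple_of_derived_le_center (halt : A.br.IsAlt)
    (hcodim : finrank K A.carrier = finrank K A.derived + 3) (hd : finrank K A.derived < 3)
    (hcen : A.derived ≤ A.center) :
    ∃ x y z : A.carrier, Submodule.span K {x, y, z} ⊔ A.derived = ⊤ ∧ A.br x z = 0 ∧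
      A.derived = Submodule.span K {A.br x y, A.br y z} := by
  have : FiniteDimensional K A.carrier := .of_finrank_pos (by omega)
  obtain ⟨C, hC⟩ := A.derived.exists_isCompl
  have hC3 : finrank K C = 3 := by
    have := Submodule.finrank_add_eq_of_isCompl hC
    omega
  let B : C →ₗ[K] C →ₗ[K] A.carrier := A.br.compl₁₂ C.subtype C.subtype
  have hB : B.IsAlt := fun u => halt u
  have hsup : C ⊔ A.br.ker = ⊤ := by
    rw [eq_top_iff, ← hC.symm.sup_eq_top, ← center_eq_ker_br]
    exact sup_le_sup_left hcen C
  have hder : A.derived = Submodule.map₂ B ⊤ ⊤ := by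
    rw [derived_eq_map₂, map₂_top_top_eq_of_sup_ker_eq_top halt.isRefl hsup,
      ← Submodule.map₂_map_map, Submodule.map_subtype_top]
  obtain ⟨e, he⟩ := exists_basis_apply_eq_zero_of_isAlt hB hC3 (hder ▸ hd)
  refine ⟨e 0, e 1, e 2, ?_, he, hder.trans (map₂_top_top_eq_span_pair_of_isAlt hB e he)⟩
  have hspan : Submodule.span K {(e 0 : A.carrier), ↑(e 1), ↑(e 2)} = C := by
    have hrange : Set.range (C.subtype ∘ e) = {(e 0 : A.carrier), ↑(e 1), ↑(e 2)} := by
      ext u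
      simp [Fin.exists_fin_succ, eq_comm]
    rw [← hrange, Set.range_comp, ← Submodule.map_span, e.span_eq, Submodule.map_subtype_top]
  rw [hspan, hC.symm.sup_eq_top]

theorem isL502_of_span_triple (heven : A.evenPart = ⊤) (h5 : finrank K A.carrier = 5)
    (hcen : A.derived ≤ A.center) {x y z : A.carrier}
    (hspan : Submodule.span K {x, y, z} ⊔ A.derived = ⊤) (hxz : A.br x z = 0)
    (hder : A.derived = Submodule.span K {A.br x y, A.br y z}) : A.IsL502 := by
  have hev (u : A.carrier) : u ∈ A.evenPart := heven ▸ Submodule.mem_top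
  have hcentral (u v : A.carrier) : A.br u v ∈ A.center :=
    hcen (Submodule.subset_span ⟨u, v, rfl⟩)
  have htop : Submodule.span K ({x, y, z, A.br x y, A.br y z} : Set A.carrier) = ⊤ := by
    rw [hder, ← Submodule.span_union] at hspan
    simpa only [Set.insert_union, Set.singleton_union] using hspan
  have hli : LinearIndependent K ![x, y, z, A.br x y, A.br y z] := by
    refine linearIndependent_of_top_le_span_of_card_eq_finrank ?_ (by simp [h5])
    simp only [Matrix.range_cons, Matrix.range_empty, Set.union_empty, Set.singleton_union]
    exact htop.ge
  exact ⟨x, y, z, A.br x y, A.br y z, hev _, hev _, hev _, hev _, hev _, hli, htop, rfl, rfl, hxz,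
    hcentral _ _, hcentral _ _⟩

end SuperLie

theorem stmt14_general {K : Type} [Field K] (h2 : (2 : K) ≠ 0) (A : SuperLie K)
    (hm : finrank K A.evenPart = 5) (hodd : A.oddPart = ⊥)
    (hd : finrank K A.derived = 2) (hcen : A.derived ≤ A.center) : A.IsL502 := by
  have heven : A.evenPart = ⊤ := evenPart_eq_top_of_oddPart_eq_bot hodd
  have h5 : finrank K A.carrier = 5 := by rw [← hm, heven, finrank_top]
  obtain ⟨x, y, z, hspan, hxz, hder⟩ :=
    exists_span_triple_of_derived_le_center (isAlt_br_of_oddPart_eq_bot h2 hodd)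
      (by omega) (by omega) hcen
  exact isL502_of_span_triple heven h5 hcen hspan hxz hder

/-- A nilpotent Lie superalgebra of dimension `(5|0)` with
`dim L' = 2` and `L' = Z(L)` is isomorphic to `L_{5,0}^2`. -/
theorem stmt14 {K : Type} [Field K] (h2 : (2 : K) ≠ 0) (h3 : (3 : K) ≠ 0)
    (A : SuperLie K) [FiniteDimensional K A.carrier] (hnil : A.IsNilpotent)
    (hm : finrank K A.evenPart = 5) (hn : finrank K A.oddPart = 0)
    (hd : finrank K A.derived = 2) (hzd : A.derived = A.center) :
    A.IsL502 :=
  stmt14_general h2 A hm (Submodule.finrank_eq_zero.1 hn) hd hzd.le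
end

section
/- Let L be a nilpotent Lie superalgebra of dimension (m | n) with dim L' = (r | s), r+s ≥ 1, over a field of characteristic ≠ 2,3. Then dim M(L) ≤ (1/2)(m+n+r+s-2)(m+n-r-s-1) + n + 1. Moreover, when r+s = 1, equality holds if and only if L ≅ H(1,0) ⊕ A(m-3 | n), where H(1,0) is the 3-dimensional even Heisenberg algebra and A(m-3 | n) is abelian. -/
open Module Function TensorProduct

open SuperLie

/-
Let `B → L` be a stem extension with kernel `M` and let `z ∈ B` lift a nonzero homogeneous central
element `ζ ∈ L'`. Dividing `M` by the image of `[z, -]` gives a stem extension of `L/ζ`; since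
`[z, -]` kills `B'`, that image has dimension at most `dim L/L'`. Hence the bound follows by
induction on `dim L'`. If `dim L' = 1`, then `L/ζ` is abelian, so its multiplier is its graded
exterior square, and the Jacobi identity for `z` shows that the image has dimension at most two.
In the case of equality `ζ` is even and the image has dimension exactly two, which forces `L` to
be `H(1,0)` plus an abelian algebra. Conversely, for such an `L` the bound is attained by the
central extension that is defined by a maximal family of independent cocycles `φ ∧ ψ`, where `φ`
and `ψ` are coordinate forms.
-/

namespace SuperLie

variable {K : Type} [Field K] {A B : SuperLie K}

/-! ### Homogeneous elements -/

/-- The homogeneous elements of parity `a`, with `false` for even and `true` for odd, so that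
parities have the form in which they enter the Jacobi identity of `SuperLie`. -/
def IsHomogeneous (A : SuperLie K) (a : Bool) (x : A.carrier) : Prop :=
  A.J x = if a then -x else x

/-- The Koszul sign `(-1)^(ab)` of two parities. -/
def koszulSign (K : Type) [Field K] (a b : Bool) : K := if a && b then -1 else 1

/-- The projection `x ↦ (x ± J x) / 2` onto the homogeneous elements of parity `a`. -/
def homPart (A : SuperLie K) (a : Bool) : A.carrier →ₗ[K] A.carrier :=
  (2 : K)⁻¹ • (LinearMap.id + (if a then (-1 : K) else 1) • A.J)

lemma koszulSign_ne_zero (a b : Bool) : koszulSign K a b ≠ 0 := by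
  cases a <;> cases b <;> simp [koszulSign]

lemma mem_evenPart {x : A.carrier} : x ∈ A.evenPart ↔ A.IsHomogeneous false x := by
  simp [evenPart, IsHomogeneous, sub_eq_zero]

lemma mem_oddPart {x : A.carrier} : x ∈ A.oddPart ↔ A.IsHomogeneous true x := by
  simp [oddPart, IsHomogeneous, add_eq_zero_iff_eq_neg]

lemma mem_center {x : A.carrier} : x ∈ A.center ↔ ∀ y, A.br x y = 0 := by
  simp [center]

lemma eq_zero_of_eq_neg [NeZero (2 : K)] {V : Type*} [AddCommGroup V] [Module K V] {x : V}
    (h : x = -x) : x = 0 := by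
  have h2 : (2 : K) • x = 0 := by rwa [two_smul, ← eq_neg_iff_add_eq_zero]
  exact (smul_eq_zero.mp h2).resolve_left two_ne_zero

namespace IsHomogeneous

variable {a b c : Bool} {x y z : A.carrier}

lemma smul (hx : A.IsHomogeneous a x) (t : K) : A.IsHomogeneous a (t • x) := by
  rw [IsHomogeneous] at hx ⊢
  cases a <;> simp_all

lemma add (hx : A.IsHomogeneous a x) (hy : A.IsHomogeneous a y) :
    A.IsHomogeneous a (x + y) := by
  rw [IsHomogeneous] at hx hy ⊢
  cases a <;> simp_all [add_comm]

lemma br (hx : A.IsHomogeneous a x) (hy : A.IsHomogeneous b y) :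
    A.IsHomogeneous (a ^^ b) (A.br x y) := by
  rw [IsHomogeneous] at hx hy ⊢
  cases a <;> cases b <;> simp_all [A.J_br]

lemma br_comm (hx : A.IsHomogeneous a x) (hy : A.IsHomogeneous b y) :
    A.br x y = -koszulSign K a b • A.br y x := by
  cases a <;> cases b <;> simp only [koszulSign, Bool.and_true, Bool.and_false,
    Bool.false_eq_true, if_true, if_false, neg_neg, neg_smul, one_smul]
  · exact A.skew_e x y hx
  · exact A.skew_e x y hx
  · rw [A.skew_e y x hy, neg_neg]
  · exact A.skew_o x y hx hy

lemma jacobi (hx : A.IsHomogeneous a x) (hy : A.IsHomogeneous b y) (hz : A.IsHomogeneous c z) :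
    koszulSign K a c • A.br x (A.br y z) + koszulSign K b a • A.br y (A.br z x)
      + koszulSign K c b • A.br z (A.br x y) = 0 :=
  A.jacobi a b c x y z hx hy hz

lemma eq_zero_of_not [NeZero (2 : K)] (hx : A.IsHomogeneous a x) (hx' : A.IsHomogeneous (!a) x) :
    x = 0 := by
  refine eq_zero_of_eq_neg (K := K) ?_
  cases a
  · exact Eq.trans (Eq.symm hx) hx'
  · exact Eq.trans (Eq.symm hx') hx

lemma br_self [NeZero (2 : K)] (hx : A.IsHomogeneous false x) : A.br x x = 0 :=
  eq_zero_of_eq_neg (K := K) (A.skew_e x x hx)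

end IsHomogeneous

lemma homPart_apply (a : Bool) (x : A.carrier) :
    A.homPart a x = (2 : K)⁻¹ • (x + (if a then (-1 : K) else 1) • A.J x) := rfl

lemma isHomogeneous_homPart (a : Bool) (x : A.carrier) : A.IsHomogeneous a (A.homPart a x) := by
  cases a <;> simp [IsHomogeneous, homPart_apply, A.J_inv, add_comm, ← smul_neg]

lemma homPart_add_homPart [NeZero (2 : K)] (x : A.carrier) :
    A.homPart false x + A.homPart true x = x := by
  rw [homPart_apply, homPart_apply, ← smul_add, inv_smul_eq_iff₀ two_ne_zero, two_smul]
  simp only [Bool.false_eq_true, if_true, if_false, one_smul, neg_smul]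
  abel

lemma homPart_mem {S : Submodule K A.carrier} (hS : S ≤ S.comap A.J) (a : Bool) {x : A.carrier}
    (hx : x ∈ S) : A.homPart a x ∈ S :=
  S.smul_mem _ (S.add_mem hx (S.smul_mem _ (hS hx)))

lemma exists_isHomogeneous_ne_zero [NeZero (2 : K)] {S : Submodule K A.carrier}
    (hS : S ≤ S.comap A.J) (hne : S ≠ ⊥) : ∃ a, ∃ x ∈ S, A.IsHomogeneous a x ∧ x ≠ 0 := by
  obtain ⟨x, hxS, hx⟩ := S.exists_mem_ne_zero_of_ne_bot hne
  by_contra! h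
  refine hx ?_
  rw [← homPart_add_homPart x, h _ _ (homPart_mem hS false hxS) (isHomogeneous_homPart _ _),
    h _ _ (homPart_mem hS true hxS) (isHomogeneous_homPart _ _), add_zero]

lemma isCompl_evenPart_oddPart [NeZero (2 : K)] (A : SuperLie K) :
    IsCompl A.evenPart A.oddPart := by
  refine ⟨Submodule.disjoint_def.mpr fun x h₀ h₁ =>
    (mem_evenPart.mp h₀).eq_zero_of_not (mem_oddPart.mp h₁), ?_⟩
  refine codisjoint_iff.mpr (eq_top_iff.mpr fun x _ => ?_)
  rw [← homPart_add_homPart x]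
  exact Submodule.add_mem_sup (mem_evenPart.mpr (isHomogeneous_homPart _ _))
    (mem_oddPart.mpr (isHomogeneous_homPart _ _))

lemma finrank_evenPart_add_finrank_oddPart [NeZero (2 : K)] (A : SuperLie K)
    [FiniteDimensional K A.carrier] :
    finrank K A.evenPart + finrank K A.oddPart = finrank K A.carrier :=
  Submodule.finrank_add_eq_of_isCompl A.isCompl_evenPart_oddPart

lemma finrank_inf_evenPart_add_finrank_inf_oddPart [NeZero (2 : K)]
    [FiniteDimensional K A.carrier] {S : Submodule K A.carrier} (hS : S ≤ S.comap A.J) :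
    finrank K ↥(S ⊓ A.evenPart) + finrank K ↥(S ⊓ A.oddPart) = finrank K S := by
  have hsup : S ⊓ A.evenPart ⊔ S ⊓ A.oddPart = S := by
    refine le_antisymm (sup_le inf_le_left inf_le_left) fun x hx => ?_
    rw [← homPart_add_homPart x]
    exact Submodule.add_mem_sup
      ⟨homPart_mem hS false hx, mem_evenPart.mpr (isHomogeneous_homPart _ _)⟩
      ⟨homPart_mem hS true hx, mem_oddPart.mpr (isHomogeneous_homPart _ _)⟩
  have hinf : S ⊓ A.evenPart ⊓ (S ⊓ A.oddPart) = ⊥ :=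
    (A.isCompl_evenPart_oddPart.disjoint.mono inf_le_right inf_le_right).eq_bot
  rw [← Submodule.finrank_sup_add_finrank_inf_eq, hsup, hinf, finrank_bot, add_zero]

lemma exists_isHomogeneous_basis [NeZero (2 : K)] (A : SuperLie K)
    [FiniteDimensional K A.carrier] :
    ∃ b : Basis (Fin (finrank K A.evenPart) ⊕ Fin (finrank K A.oddPart)) K A.carrier,
      ∀ i, A.IsHomogeneous i.isRight (b i) := by
  refine ⟨((finBasis K A.evenPart).prod (finBasis K A.oddPart)).map
    (Submodule.prodEquivOfIsCompl _ _ A.isCompl_evenPart_oddPart), ?_⟩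
  rintro (i | i)
  · simpa using mem_evenPart.mp (finBasis K A.evenPart i).2
  · simpa using mem_oddPart.mp (finBasis K A.oddPart i).2

/-! ### Center, derived subalgebra and descending central series -/

lemma center_le_comap_J : A.center ≤ A.center.comap A.J := fun x hx =>
  mem_center.mpr fun y => by
    rw [← A.J_inv y, ← A.J_br, mem_center.mp hx, map_zero]

lemma br_mem_derived (x y : A.carrier) : A.br x y ∈ A.derived :=
  Submodule.subset_span ⟨x, y, rfl⟩

lemma derived_le_comap_J : A.derived ≤ A.derived.comap A.J := by
  rw [derived, Submodule.span_le]
  rintro _ ⟨x, y, rfl⟩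
  rw [SetLike.mem_coe, Submodule.mem_comap, A.J_br]
  exact br_mem_derived _ _

lemma derived_le_of_isHomogeneous [NeZero (2 : K)] {S : Submodule K A.carrier}
    (hS : ∀ a b x y, A.IsHomogeneous a x → A.IsHomogeneous b y → A.br x y ∈ S) :
    A.derived ≤ S := by
  rw [derived, Submodule.span_le]
  rintro _ ⟨x, y, rfl⟩
  have h (a b : Bool) : A.br (A.homPart a x) (A.homPart b y) ∈ S :=
    hS a b _ _ (isHomogeneous_homPart a x) (isHomogeneous_homPart b y)
  rw [← homPart_add_homPart x, ← homPart_add_homPart y]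
  simp only [map_add, LinearMap.add_apply]
  exact S.add_mem (S.add_mem (h _ _) (h _ _)) (S.add_mem (h _ _) (h _ _))

lemma br_mem_of_br_mem [NeZero (2 : K)] {S I : Submodule K A.carrier} (hS : S ≤ S.comap A.J)
    (h : ∀ x ∈ S, ∀ y, A.br x y ∈ I) {x : A.carrier} (hx : x ∈ S) (y : A.carrier) :
    A.br y x ∈ I := by
  have hab (a b : Bool) : A.br (A.homPart b y) (A.homPart a x) ∈ I := by
    rw [(isHomogeneous_homPart b y).br_comm (isHomogeneous_homPart a x)]
    exact I.smul_mem _ (h _ (homPart_mem hS a hx) _)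
  rw [← homPart_add_homPart x, ← homPart_add_homPart y]
  simp only [map_add, LinearMap.add_apply]
  exact I.add_mem (I.add_mem (hab _ _) (hab _ _)) (I.add_mem (hab _ _) (hab _ _))

lemma br_eq_zero_of_mem_center [NeZero (2 : K)] {x : A.carrier} (hx : x ∈ A.center)
    (y : A.carrier) : A.br y x = 0 := by
  simpa using br_mem_of_br_mem (I := ⊥) center_le_comap_J
    (fun x hx y => (Submodule.mem_bot K).mpr (mem_center.mp hx y)) hx y

lemma lcs_le_comap_J (k : ℕ) : A.lcs k ≤ (A.lcs k).comap A.J := by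
  induction k with
  | zero => exact fun x _ => Submodule.mem_top
  | succ k ih =>
    rw [lcs, Submodule.span_le]
    rintro _ ⟨x, hx, y, rfl⟩
    rw [SetLike.mem_coe, Submodule.mem_comap, A.J_br]
    exact Submodule.subset_span ⟨_, ih hx, _, rfl⟩

lemma br_mem_lcs {k : ℕ} {x : A.carrier} (hx : x ∈ A.lcs k) (y : A.carrier) :
    A.br x y ∈ A.lcs (k + 1) :=
  Submodule.subset_span ⟨x, hx, y, rfl⟩

lemma lcs_succ_le_derived (k : ℕ) : A.lcs (k + 1) ≤ A.derived :=
  Submodule.span_mono fun _ ⟨x, _, y, h⟩ => ⟨x, y, h⟩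

lemma lcs_one : A.lcs 1 = A.derived := by simp [lcs, derived]

lemma IsNilpotent.exists_isHomogeneous_mem_center_inf_derived [NeZero (2 : K)]
    (hA : A.IsNilpotent) (hA' : A.derived ≠ ⊥) :
    ∃ a, ∃ ζ ∈ A.center ⊓ A.derived, A.IsHomogeneous a ζ ∧ ζ ≠ 0 := by
  classical
  obtain ⟨k, hk, hk'⟩ : ∃ k, A.lcs (k + 1) ≠ ⊥ ∧ A.lcs (k + 2) = ⊥ := by
    have hlast := Nat.find_spec hA
    have hmin {j : ℕ} (hj : j < Nat.find hA) := Nat.find_min hA hj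
    rcases h : Nat.find hA with _ | _ | k
    · rw [h] at hlast
      exact absurd (eq_bot_iff.mpr fun x _ => hlast ▸ Submodule.mem_top) hA'
    · rw [h] at hlast
      exact absurd (lcs_one.symm.trans hlast) hA'
    · exact ⟨k, hmin (by lia), by rwa [h] at hlast⟩
  obtain ⟨a, ζ, hζ, ha, hne⟩ := exists_isHomogeneous_ne_zero (lcs_le_comap_J _) hk
  refine ⟨a, ζ, ⟨mem_center.mpr fun y => ?_, lcs_succ_le_derived k hζ⟩, ha, hne⟩
  simpa [hk'] using br_mem_lcs hζ y

/-! ### Homomorphisms and quotients -/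

lemma exists_isHomogeneous_lift [NeZero (2 : K)] {V : Type*} [AddCommGroup V] [Module K V]
    {J : V →ₗ[K] V} {π : A.carrier →ₗ[K] V} (hJ : ∀ x, π (A.J x) = J (π x))
    (hπ : Surjective π) {a : Bool} {y : V} (hy : J y = if a then -y else y) :
    ∃ x, A.IsHomogeneous a x ∧ π x = y := by
  obtain ⟨x, rfl⟩ := hπ y
  refine ⟨A.homPart a x, isHomogeneous_homPart a x, ?_⟩
  rw [homPart_apply, map_smul, map_add, map_smul, hJ, hy, inv_smul_eq_iff₀ two_ne_zero, two_smul]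
  cases a <;> simp

namespace Hom

/-- The composite of two homomorphisms. -/
def comp {C : SuperLie K} (g : Hom A C) (f : Hom B A) : Hom B C where
  toLin := g.toLin ∘ₗ f.toLin
  map_J x := by simp [f.map_J, g.map_J]
  map_br x y := by simp [f.map_br, g.map_br]

lemma isHomogeneous (f : Hom B A) {a : Bool} {x : B.carrier} (hx : B.IsHomogeneous a x) :
    A.IsHomogeneous a (f.toLin x) := by
  rw [IsHomogeneous, ← f.map_J, show B.J x = _ from hx]
  cases a <;> simp

lemma map_lcs (f : Hom B A) (hf : Surjective f.toLin) (k : ℕ) :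
    (B.lcs k).map f.toLin = A.lcs k := by
  induction k with
  | zero => simp [lcs, LinearMap.range_eq_top.2 hf]
  | succ k ih =>
    rw [lcs, lcs, Submodule.map_span, ← ih]
    congr 1
    ext z
    constructor
    · rintro ⟨_, ⟨x, hx, y, rfl⟩, rfl⟩
      exact ⟨_, Submodule.mem_map_of_mem hx, _, (f.map_br x y).symm⟩
    · rintro ⟨_, ⟨x, hx, rfl⟩, y, rfl⟩
      obtain ⟨y, rfl⟩ := hf y
      exact ⟨_, ⟨x, hx, y, rfl⟩, f.map_br x y⟩

lemma map_derived (f : Hom B A) (hf : Surjective f.toLin) :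
    B.derived.map f.toLin = A.derived := by
  rw [← lcs_one, f.map_lcs hf, lcs_one]

lemma map_oddPart [NeZero (2 : K)] (f : Hom B A) (hf : Surjective f.toLin) :
    B.oddPart.map f.toLin = A.oddPart := by
  refine le_antisymm (Submodule.map_le_iff_le_comap.mpr fun x hx =>
    mem_oddPart.mpr (f.isHomogeneous (mem_oddPart.mp hx))) fun y hy => ?_
  obtain ⟨x, hx, rfl⟩ := exists_isHomogeneous_lift f.map_J hf (mem_oddPart.mp hy)
  exact Submodule.mem_map_of_mem (mem_oddPart.mpr hx)

lemma isNilpotent (f : Hom B A) (hf : Surjective f.toLin) (hB : B.IsNilpotent) :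
    A.IsNilpotent := by
  obtain ⟨k, hk⟩ := hB
  exact ⟨k, by rw [← f.map_lcs hf, hk, Submodule.map_bot]⟩

end Hom

section Quotient

variable [NeZero (2 : K)] (I : Submodule K A.carrier) (hJ : I ≤ I.comap A.J)
  (hI : ∀ x ∈ I, ∀ y, A.br x y ∈ I)

lemma exists_isHomogeneous_mkQ_eq {a : Bool} {y : A.carrier ⧸ I}
    (hy : I.mapQ I A.J hJ y = if a then -y else y) :
    ∃ x, A.IsHomogeneous a x ∧ I.mkQ x = y :=
  exists_isHomogeneous_lift (J := I.mapQ I A.J hJ) (π := I.mkQ) (fun _ => rfl)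
    I.mkQ_surjective hy

/-- The quotient of a Lie superalgebra by a graded right ideal; graded right ideals are
two-sided. -/
def quotient : SuperLie K where
  carrier := A.carrier ⧸ I
  J := I.mapQ I A.J hJ
  br := (I.liftQ (I.liftQ (A.br.compr₂ I.mkQ) fun x hx => LinearMap.mem_ker.mpr <|
      LinearMap.ext fun y => (Submodule.Quotient.mk_eq_zero I).mpr (hI x hx y)).flip
    fun x hx => LinearMap.mem_ker.mpr <| Submodule.linearMap_qext I <| LinearMap.ext fun y =>
      (Submodule.Quotient.mk_eq_zero I).mpr (br_mem_of_br_mem hJ hI hx y)).flip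
  J_inv := I.mkQ_surjective.forall.mpr fun x => congrArg I.mkQ (A.J_inv x)
  J_br := I.mkQ_surjective.forall₂.mpr fun x y => congrArg I.mkQ (A.J_br x y)
  skew_e x y hx := by
    obtain ⟨x, hx', rfl⟩ := exists_isHomogeneous_mkQ_eq I hJ (a := false) hx
    obtain ⟨y, rfl⟩ := I.mkQ_surjective y
    exact congrArg I.mkQ (A.skew_e x y hx')
  skew_o x y hx hy := by
    obtain ⟨x, hx', rfl⟩ := exists_isHomogeneous_mkQ_eq I hJ (a := true) hx
    obtain ⟨y, hy', rfl⟩ := exists_isHomogeneous_mkQ_eq I hJ (a := true) hy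
    exact congrArg I.mkQ (A.skew_o x y hx' hy')
  jacobi a b c x y z hx hy hz := by
    obtain ⟨x, hx', rfl⟩ := exists_isHomogeneous_mkQ_eq I hJ hx
    obtain ⟨y, hy', rfl⟩ := exists_isHomogeneous_mkQ_eq I hJ hy
    obtain ⟨z, hz', rfl⟩ := exists_isHomogeneous_mkQ_eq I hJ hz
    exact congrArg I.mkQ (A.jacobi a b c x y z hx' hy' hz')

/-- The canonical projection onto the quotient by a graded ideal. -/
def quotientMk : Hom A (quotient I hJ hI) where
  toLin := I.mkQ
  map_J _ := rfl
  map_br _ _ := rfl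

/-- The homomorphism induced on the quotient by a graded ideal contained in the kernel. -/
def quotientLift (f : Hom A B) (hf : I ≤ LinearMap.ker f.toLin) : Hom (quotient I hJ hI) B where
  toLin := I.liftQ f.toLin hf
  map_J := I.mkQ_surjective.forall.mpr f.map_J
  map_br := I.mkQ_surjective.forall₂.mpr f.map_br

end Quotient

/-! ### Counting graded pairs -/

section GradedPairs

variable {ι : Type*} [Fintype ι] [LinearOrder ι] {o : ι → Bool}

/-- The pairs `i < j` together with the pairs `(i, i)` with `i` odd. When `o` gives the parities
of a homogeneous basis, they index a basis of the exterior square in the graded sense. -/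
def gradedPairs (o : ι → Bool) : Finset (ι × ι) :=
  Finset.univ.filter fun p => p.1 < p.2 ∨ p.1 = p.2 ∧ o p.1

lemma mem_gradedPairs {i j : ι} : (i, j) ∈ gradedPairs o ↔ i < j ∨ i = j ∧ o i := by
  simp [gradedPairs]

lemma mk_injOn_gradedPairs : Set.InjOn (fun p : ι × ι => s(p.1, p.2)) (gradedPairs o) := by
  rintro ⟨i, j⟩ hij ⟨k, l⟩ hkl h
  have hij : i ≤ j := (mem_gradedPairs.mp hij).elim le_of_lt fun h => h.1.le
  have hkl : k ≤ l := (mem_gradedPairs.mp hkl).elim le_of_lt fun h => h.1.le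
  obtain ⟨rfl, rfl⟩ | ⟨rfl, rfl⟩ := Sym2.eq_iff.mp h
  · rfl
  · rw [le_antisymm hij hkl]

lemma odd_of_mem_gradedPairs {p : ι × ι} (hp : p ∈ gradedPairs o) (h : p.1 = p.2) : o p.1 :=
  ((mem_gradedPairs.mp hp).resolve_left h.not_lt).2

lemma card_gradedPairs_le_add (S : Finset (Sym2 ι)) :
    (gradedPairs o).card ≤ ((gradedPairs o).filter fun p => s(p.1, p.2) ∉ S).card + S.card := by
  classical
  rw [← Finset.card_filter_add_card_filter_not (fun p => s(p.1, p.2) ∉ S)]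
  refine Nat.add_le_add_left (Finset.card_le_card_of_injOn _ (fun p hp => ?_)
    (mk_injOn_gradedPairs.mono fun p hp => (Finset.mem_filter.mp hp).1)) _
  exact not_not.mp (Finset.mem_filter.mp hp).2

lemma two_mul_card_gradedPairs (o : ι → Bool) :
    2 * (gradedPairs o).card + Fintype.card ι =
      Fintype.card ι ^ 2 + 2 * (Finset.univ.filter fun i => o i = true).card := by
  classical
  let lt : Finset (ι × ι) := Finset.univ.filter fun p => p.1 < p.2
  have hpairs : (gradedPairs o).card = lt.card + (Finset.univ.filter fun i => o i = true).card := by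
    rw [gradedPairs, Finset.filter_or, Finset.card_union_of_disjoint]
    · congr 1
      refine (Finset.card_bij (fun i _ => (i, i)) (by simp) (by simp) ?_).symm
      rintro ⟨i, j⟩ h
      obtain ⟨rfl, hi⟩ : i = j ∧ o i := by simpa using h
      exact ⟨i, by simpa using hi, rfl⟩
    · exact Finset.disjoint_filter.mpr fun p _ h h' => h.ne h'.1
  have hswap : lt.card = (Finset.univ.filter fun p : ι × ι => p.2 < p.1).card :=
    Finset.card_equiv (Equiv.prodComm ι ι) (by simp [lt])
  have hoff : lt.card + (Finset.univ.filter fun p : ι × ι => p.2 < p.1).card =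
      (Finset.univ : Finset ι).offDiag.card := by
    rw [← Finset.card_union_of_disjoint
      (Finset.disjoint_filter.mpr fun p _ h h' => lt_asymm h h'), ← Finset.filter_or]
    congr 1
    ext ⟨i, j⟩
    simp [lt_or_lt_iff_ne]
  have hdiag : (Finset.univ : Finset ι).offDiag.card + Fintype.card ι = Fintype.card ι ^ 2 := by
    rw [Finset.offDiag_card, Finset.card_univ, sq]
    exact Nat.sub_add_cancel (Nat.le_mul_self _)
  lia

end GradedPairs

/-! ### Stem extensions and the multiplier -/

/-- A surjective homomorphism whose kernel lies in the center and in the derived subalgebra: the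
extensions of `A` whose kernels compete in `multDim`. -/
structure IsStem (f : Hom B A) : Prop where
  surjective : Surjective f.toLin
  ker_le_center : LinearMap.ker f.toLin ≤ B.center
  ker_le_derived : LinearMap.ker f.toLin ≤ B.derived

lemma finrank_map_add_finrank_inf_ker {V W : Type*} [AddCommGroup V] [Module K V]
    [FiniteDimensional K V] [AddCommGroup W] [Module K W] (g : V →ₗ[K] W) (S : Submodule K V) :
    finrank K (S.map g) + finrank K ↥(S ⊓ LinearMap.ker g) = finrank K S := by
  have h := LinearMap.finrank_range_add_finrank_ker (g.domRestrict S)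
  rw [LinearMap.range_domRestrict, LinearMap.ker_domRestrict] at h
  rw [← h, ← Submodule.map_comap_subtype, Submodule.finrank_map_subtype_eq]

section CentralExtension

variable [NeZero (2 : K)] {f : Hom B A} (hc : LinearMap.ker f.toLin ≤ B.center)
include hc

lemma br_congr_of_ker_le_center {x x' y y' : B.carrier} (hx : f.toLin x = f.toLin x')
    (hy : f.toLin y = f.toLin y') : B.br x y = B.br x' y' := by
  have hx' : B.br (x - x') y = 0 :=
    mem_center.mp (hc (LinearMap.mem_ker.mpr (by rw [map_sub, hx, sub_self]))) y
  have hy' : B.br x' (y - y') = 0 :=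
    br_eq_zero_of_mem_center (hc (LinearMap.mem_ker.mpr (by rw [map_sub, hy, sub_self]))) x'
  rw [map_sub, LinearMap.sub_apply, sub_eq_zero] at hx'
  rw [map_sub, sub_eq_zero] at hy'
  rw [hx', hy']

lemma derived_le_span_br {ι : Type*} {w : ι → B.carrier}
    (hw : Submodule.span K (Set.range (f.toLin ∘ w)) = ⊤) :
    B.derived ≤ Submodule.span K (Set.range fun p : ι × ι => B.br (w p.1) (w p.2)) := by
  have hlift (x : B.carrier) : ∃ x' ∈ Submodule.span K (Set.range w), f.toLin x' = f.toLin x := by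
    rw [Set.range_comp, Submodule.span_image] at hw
    exact Submodule.mem_map.mp (hw ▸ Submodule.mem_top)
  rw [derived, Submodule.span_le]
  rintro _ ⟨x, y, rfl⟩
  obtain ⟨x', hx', hx⟩ := hlift x
  obtain ⟨y', hy', hy⟩ := hlift y
  rw [br_congr_of_ker_le_center hc hx.symm hy.symm]
  have h := Submodule.apply_mem_map₂ B.br hx' hy'
  rwa [Submodule.map₂_span_span, Set.image2_range] at h

lemma derived_le_span_br_gradedPairs {ι : Type*} [Fintype ι] [LinearOrder ι] {o : ι → Bool}
    {w : ι → B.carrier} (hw : Submodule.span K (Set.range (f.toLin ∘ w)) = ⊤)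
    (ho : ∀ i, B.IsHomogeneous (o i) (w i)) :
    B.derived ≤ Submodule.span K ((fun p : ι × ι => B.br (w p.1) (w p.2)) '' gradedPairs o) := by
  refine (derived_le_span_br hc hw).trans (Submodule.span_le.mpr ?_)
  rintro _ ⟨⟨i, j⟩, rfl⟩
  change B.br (w i) (w j) ∈ Submodule.span K _
  have hmem {i j : ι} (h : (i, j) ∈ gradedPairs o) :=
    Submodule.subset_span (R := K) (Set.mem_image_of_mem (fun p : ι × ι => B.br (w p.1) (w p.2)) h)
  obtain hij | rfl | hji := lt_trichotomy i j
  · exact hmem (mem_gradedPairs.mpr (Or.inl hij))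
  · cases hi : o i
    · rw [IsHomogeneous.br_self (hi ▸ ho i)]
      exact zero_mem _
    · exact hmem (mem_gradedPairs.mpr (Or.inr ⟨rfl, hi⟩))
  · rw [(ho i).br_comm (ho j)]
    exact Submodule.smul_mem _ _ (hmem (mem_gradedPairs.mpr (Or.inl hji)))

lemma exists_finset_derived_le_span [FiniteDimensional K A.carrier] (hf : Surjective f.toLin) :
    ∃ S : Finset B.carrier, B.derived ≤ Submodule.span K S ∧
      2 * S.card + finrank K A.carrier ≤ finrank K A.carrier ^ 2 + 2 * finrank K A.oddPart := by
  classical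
  obtain ⟨b, hb⟩ := A.exists_isHomogeneous_basis
  choose w hw hfw using fun i => exists_isHomogeneous_lift f.map_J hf (hb i)
  let _ := LinearOrder.lift' (Fintype.equivFin (Fin (finrank K A.evenPart) ⊕
    Fin (finrank K A.oddPart))) (Equiv.injective _)
  refine ⟨(gradedPairs Sum.isRight).image fun p => B.br (w p.1) (w p.2), ?_, ?_⟩
  · rw [Finset.coe_image]
    refine derived_le_span_br_gradedPairs hc ?_ hw
    rw [show f.toLin ∘ w = b from funext hfw, b.span_eq]
  · have hpairs := two_mul_card_gradedPairs
      (Sum.isRight : Fin (finrank K A.evenPart) ⊕ Fin (finrank K A.oddPart) → Bool)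
    have hodd : (Finset.univ.filter fun i : Fin (finrank K A.evenPart) ⊕ Fin (finrank K A.oddPart)
        => i.isRight = true).card = finrank K A.oddPart := by
      rw [← Fintype.card_subtype, Fintype.card_congr Equiv.sumIsRight, Fintype.card_fin]
    rw [← finrank_eq_card_basis b, hodd] at hpairs
    have := Finset.card_image_le (s := gradedPairs Sum.isRight)
      (f := fun p => B.br (w p.1) (w p.2))
    lia

end CentralExtension

section IsStem

variable [NeZero (2 : K)] [FiniteDimensional K A.carrier] {f : Hom B A}

lemma IsStem.finiteDimensional (hf : IsStem f) : FiniteDimensional K B.carrier := by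
  obtain ⟨S, hS, -⟩ := exists_finset_derived_le_span hf.ker_le_center hf.surjective
  have hker : FiniteDimensional K (LinearMap.ker f.toLin) :=
    Submodule.finiteDimensional_of_le (hf.ker_le_derived.trans hS)
  have hquot : FiniteDimensional K (B.carrier ⧸ LinearMap.ker f.toLin) :=
    (f.toLin.quotKerEquivOfSurjective hf.surjective).symm.finiteDimensional
  exact Module.Finite.of_submodule_quotient (LinearMap.ker f.toLin)

lemma IsStem.finrank_derived (hf : IsStem f) :
    finrank K A.derived + finrank K (LinearMap.ker f.toLin) = finrank K B.derived := by
  have := hf.finiteDimensional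
  rw [← finrank_map_add_finrank_inf_ker f.toLin B.derived, f.map_derived hf.surjective,
    inf_eq_right.mpr hf.ker_le_derived]

lemma IsStem.two_mul_finrank_ker_add_le (hf : IsStem f) :
    2 * (finrank K (LinearMap.ker f.toLin) + finrank K A.derived) + finrank K A.carrier ≤
      finrank K A.carrier ^ 2 + 2 * finrank K A.oddPart := by
  obtain ⟨S, hS, hcard⟩ := exists_finset_derived_le_span hf.ker_le_center hf.surjective
  have := (Submodule.finrank_mono hS).trans (finrank_span_finset_le_card S)
  have := hf.finrank_derived
  lia

lemma bddAbove_finrank_ker_isStem (A : SuperLie K) [FiniteDimensional K A.carrier] :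
    BddAbove {d | ∃ (B : SuperLie K) (f : Hom B A), Surjective f.toLin ∧
      LinearMap.ker f.toLin ≤ B.center ⊓ B.derived ∧ finrank K (LinearMap.ker f.toLin) = d} := by
  refine ⟨finrank K A.carrier ^ 2 + 2 * finrank K A.oddPart, ?_⟩
  rintro _ ⟨B, f, hf, hker, rfl⟩
  have hstem : IsStem f := ⟨hf, (le_inf_iff.mp hker).1, (le_inf_iff.mp hker).2⟩
  have hle := hstem.two_mul_finrank_ker_add_le
  lia

lemma IsStem.finrank_ker_le_multDim (hf : IsStem f) :
    finrank K (LinearMap.ker f.toLin) ≤ A.multDim :=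
  le_csSup (bddAbove_finrank_ker_isStem A)
    ⟨B, f, hf.surjective, le_inf hf.ker_le_center hf.ker_le_derived, rfl⟩

lemma exists_isStem_finrank_ker_eq_multDim (A : SuperLie K) [FiniteDimensional K A.carrier] :
    ∃ (B : SuperLie K) (f : Hom B A), IsStem f ∧
      finrank K (LinearMap.ker f.toLin) = A.multDim := by
  obtain ⟨B, f, hf, hker, hdim⟩ := Nat.sSup_mem
    (by exact ⟨_, A, ⟨LinearMap.id, fun _ => rfl, fun _ _ => rfl⟩, surjective_id, by simp, rfl⟩)
    (bddAbove_finrank_ker_isStem A)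
  exact ⟨B, f, ⟨hf, (le_inf_iff.mp hker).1, (le_inf_iff.mp hker).2⟩, hdim⟩

lemma two_mul_multDim_add_le (A : SuperLie K) [FiniteDimensional K A.carrier] :
    2 * (A.multDim + finrank K A.derived) + finrank K A.carrier ≤
      finrank K A.carrier ^ 2 + 2 * finrank K A.oddPart := by
  obtain ⟨B, f, hf, hdim⟩ := exists_isStem_finrank_ker_eq_multDim A
  rw [← hdim]
  exact hf.two_mul_finrank_ker_add_le

end IsStem

/-! ### Dividing out a central element of the derived subalgebra -/

lemma exists_isHomogeneous_br_ne_zero [NeZero (2 : K)] (hA' : A.derived ≠ ⊥) :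
    ∃ a b x y, A.IsHomogeneous a x ∧ A.IsHomogeneous b y ∧ A.br x y ≠ 0 := by
  by_contra! h
  exact hA' (eq_bot_iff.mpr (derived_le_of_isHomogeneous fun a b x y hx hy => h a b x y hx hy))

lemma range_br_le_comap_J {a : Bool} {z : A.carrier} (hz : A.IsHomogeneous a z) :
    LinearMap.range (A.br z) ≤ (LinearMap.range (A.br z)).comap A.J := by
  rintro _ ⟨y, rfl⟩
  rw [Submodule.mem_comap, A.J_br, show A.J z = _ from hz]
  cases a
  · exact ⟨A.J y, rfl⟩
  · exact ⟨-A.J y, by simp⟩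

lemma mem_Z2 {z : A.carrier} : z ∈ A.Z2 ↔ ∀ y, A.br z y ∈ A.center := by
  simp [Z2]

lemma derived_le_ker_br [NeZero (2 : K)] {a : Bool} {z : A.carrier} (hz : A.IsHomogeneous a z)
    (hz2 : z ∈ A.Z2) : A.derived ≤ LinearMap.ker (A.br z) := by
  refine derived_le_of_isHomogeneous fun b c x y hx hy => LinearMap.mem_ker.mpr ?_
  have hjac := hz.jacobi hx hy
  rw [hy.br_comm hz, map_smul, br_eq_zero_of_mem_center (mem_Z2.mp hz2 y),
    br_eq_zero_of_mem_center (mem_Z2.mp hz2 x), smul_zero, smul_zero, smul_zero, add_zero,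
    add_zero] at hjac
  exact (smul_eq_zero.mp hjac).resolve_left (koszulSign_ne_zero _ _)

lemma Hom.finrank_add_finrank_ker [FiniteDimensional K B.carrier] (f : Hom B A)
    (hf : Surjective f.toLin) :
    finrank K A.carrier + finrank K (LinearMap.ker f.toLin) = finrank K B.carrier := by
  rw [← LinearMap.finrank_range_add_finrank_ker f.toLin, LinearMap.range_eq_top.mpr hf,
    finrank_top]

section StemExtension

variable {f : Hom B A} {z : B.carrier}

lemma range_br_le_ker (hz : f.toLin z ∈ A.center) :
    LinearMap.range (B.br z) ≤ LinearMap.ker f.toLin := by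
  rintro _ ⟨y, rfl⟩
  rw [LinearMap.mem_ker, f.map_br, mem_center.mp hz]

lemma finrank_ker_comp_of_ker_eq_span {C : SuperLie K} [FiniteDimensional K B.carrier]
    {π : Hom A C} (hπ : LinearMap.ker π.toLin = K ∙ f.toLin z) (hz : f.toLin z ≠ 0) :
    finrank K (LinearMap.ker (π.comp f).toLin) = finrank K (LinearMap.ker f.toLin) + 1 := by
  have hker : LinearMap.ker (π.comp f).toLin = (K ∙ f.toLin z).comap f.toLin := by
    rw [← hπ]
    exact LinearMap.ker_comp _ _
  have hmap : (LinearMap.ker (π.comp f).toLin).map f.toLin = K ∙ f.toLin z := by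
    rw [hker, Submodule.map_comap_eq_of_le]
    exact (Submodule.span_singleton_le_iff_mem _ _).mpr (LinearMap.mem_range_self _ z)
  rw [← finrank_map_add_finrank_inf_ker f.toLin, hmap, finrank_span_singleton hz,
    inf_eq_right.mpr (hker ▸ LinearMap.ker_le_comap f.toLin), add_comm]

variable [NeZero (2 : K)] {a : Bool}

lemma IsStem.finrank_range_br_add_finrank_derived_le [FiniteDimensional K A.carrier]
    (hf : IsStem f) (hz : B.IsHomogeneous a z) (hfz : f.toLin z ∈ A.center) :
    finrank K (LinearMap.range (B.br z)) + finrank K A.derived ≤ finrank K A.carrier := by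
  have := hf.finiteDimensional
  have hz2 : z ∈ B.Z2 :=
    mem_Z2.mpr fun y => hf.ker_le_center (range_br_le_ker hfz (LinearMap.mem_range_self _ y))
  have hker := Submodule.finrank_mono (derived_le_ker_br hz hz2)
  have hrank := LinearMap.finrank_range_add_finrank_ker (B.br z)
  have hder := hf.finrank_derived
  have hdim := f.finrank_add_finrank_ker hf.surjective
  lia

lemma IsStem.quotientLift {C : SuperLie K} {I : Submodule K B.carrier} {hJ : I ≤ I.comap B.J}
    {hI : ∀ x ∈ I, ∀ y, B.br x y ∈ I} {g : Hom B C} (hg : Surjective g.toLin)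
    (hker : ∀ x ∈ LinearMap.ker g.toLin, ∀ y, B.br x y ∈ I)
    (hder : LinearMap.ker g.toLin ≤ B.derived) (hIg : I ≤ LinearMap.ker g.toLin) :
    IsStem (quotientLift I hJ hI g hIg) := by
  have hmap : LinearMap.ker (SuperLie.quotientLift I hJ hI g hIg).toLin =
      (LinearMap.ker g.toLin).map I.mkQ := I.ker_liftQ _ hIg
  refine ⟨fun y => ?_, ?_, ?_⟩
  · obtain ⟨x, rfl⟩ := hg y
    exact ⟨I.mkQ x, rfl⟩
  · rw [hmap]
    rintro _ ⟨x, hx, rfl⟩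
    exact mem_center.mpr (I.mkQ_surjective.forall.mpr fun y =>
      (Submodule.Quotient.mk_eq_zero I).mpr (hker x hx y))
  · rw [hmap, ← (quotientMk I hJ hI).map_derived I.mkQ_surjective]
    exact Submodule.map_mono hder

/-- The extension `B` of `A` induces the stem extension `B / [z, B]` of `A / K ζ`, where `z` lifts
`ζ`. -/
theorem IsStem.finrank_ker_add_one_le {C : SuperLie K} [FiniteDimensional K A.carrier]
    (hf : IsStem f) (hz : B.IsHomogeneous a z) (hfz : f.toLin z ∈ A.center ⊓ A.derived)
    (hz0 : f.toLin z ≠ 0) {π : Hom A C} (hπ : Surjective π.toLin)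
    (hker : LinearMap.ker π.toLin = K ∙ f.toLin z) :
    finrank K (LinearMap.ker f.toLin) + 1 ≤
      C.multDim + finrank K (LinearMap.range (B.br z)) := by
  have := hf.finiteDimensional
  have hC : FiniteDimensional K C.carrier := Module.Finite.of_surjective π.toLin hπ
  set I := LinearMap.range (B.br z)
  have hIf : I ≤ LinearMap.ker f.toLin := range_br_le_ker hfz.1
  have hI (x) (hx : x ∈ I) (y) : B.br x y ∈ I := by
    rw [mem_center.mp (hf.ker_le_center (hIf hx))]
    exact I.zero_mem
  have hIπ : I ≤ LinearMap.ker (π.comp f).toLin :=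
    hIf.trans (LinearMap.ker_le_ker_comp f.toLin π.toLin)
  have hspan (x) (hx : x ∈ LinearMap.ker (π.comp f).toLin) : ∃ c : K, c • f.toLin z = f.toLin x :=
    Submodule.mem_span_singleton.mp (hker ▸ hx)
  have hsurj : Surjective (π.comp f).toLin := hπ.comp hf.surjective
  have hstem : IsStem (SuperLie.quotientLift I (range_br_le_comap_J hz) hI (π.comp f) hIπ) := by
    refine IsStem.quotientLift hsurj (fun x hx y => ?_) (fun x hx => ?_) hIπ
    · obtain ⟨c, hc⟩ := hspan x hx
      rw [br_congr_of_ker_le_center hf.ker_le_center (x' := c • z) (by simp [hc]) (y' := y) rfl]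
      exact ⟨c • y, by simp⟩
    · obtain ⟨c, hc⟩ := hspan x hx
      rw [← sup_eq_left.mpr hf.ker_le_derived, ← Submodule.comap_map_eq, Submodule.mem_comap,
        f.map_derived hf.surjective, ← hc]
      exact Submodule.smul_mem _ c hfz.2
  have hdim := finrank_map_add_finrank_inf_ker I.mkQ (LinearMap.ker (π.comp f).toLin)
  rw [I.ker_mkQ, inf_eq_right.mpr hIπ, finrank_ker_comp_of_ker_eq_span hker hz0,
    ← I.ker_liftQ _ hIπ] at hdim
  have hle := hstem.finrank_ker_le_multDim
  exact hdim ▸ Nat.add_le_add_right hle _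

lemma jacobi_lift (hc : LinearMap.ker f.toLin ≤ B.center) {b c d : Bool} {v x y : B.carrier}
    (hv : B.IsHomogeneous d v) (hx : B.IsHomogeneous b x) (hy : B.IsHomogeneous c y)
    {r s t : K} (hr : f.toLin (B.br x y) = r • f.toLin z) (hs : f.toLin (B.br y v) = s • f.toLin z)
    (ht : f.toLin (B.br v x) = t • f.toLin z) :
    koszulSign K d c • r • B.br v z + koszulSign K b d • s • B.br x z
      + koszulSign K c b • t • B.br y z = 0 := by
  have hlift {u w : B.carrier} {k : K} (h : f.toLin w = k • f.toLin z) :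
      k • B.br u z = B.br u w := by
    rw [← map_smul]
    exact br_congr_of_ker_le_center hc rfl (by rw [h, map_smul])
  rw [hlift hr, hlift hs, hlift ht]
  exact hv.jacobi hx hy

lemma range_br_le_span_pair (hc : LinearMap.ker f.toLin ≤ B.center) (hz : B.IsHomogeneous a z)
    (hd : A.derived ≤ K ∙ f.toLin z) {b c : Bool} {x y : B.carrier} (hx : B.IsHomogeneous b x)
    (hy : B.IsHomogeneous c y) (hxy : f.toLin (B.br x y) ≠ 0) :
    LinearMap.range (B.br z) ≤ Submodule.span K {B.br x z, B.br y z} := by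
  have hmul (u w : B.carrier) : ∃ k : K, k • f.toLin z = f.toLin (B.br u w) :=
    Submodule.mem_span_singleton.mp (hd (f.map_br u w ▸ br_mem_derived _ _))
  obtain ⟨r, hr⟩ := hmul x y
  have hr0 : r ≠ 0 := by
    rintro rfl
    exact hxy (by rw [← hr, zero_smul])
  have hmem {d : Bool} {v : B.carrier} (hv : B.IsHomogeneous d v) :
      B.br z v ∈ Submodule.span K {B.br x z, B.br y z} := by
    obtain ⟨s, hs⟩ := hmul y v
    obtain ⟨t, ht⟩ := hmul v x
    have hjac := jacobi_lift hc hv hx hy hr.symm hs.symm ht.symm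
    rw [add_assoc] at hjac
    rw [hz.br_comm hv]
    refine Submodule.smul_mem _ _ ?_
    rw [← Submodule.smul_mem_iff _ hr0,
      ← Submodule.smul_mem_iff _ (koszulSign_ne_zero (K := K) d c),
      eq_neg_of_add_eq_zero_left hjac]
    refine Submodule.neg_mem _ (Submodule.add_mem _ ?_ ?_)
    · exact Submodule.smul_mem _ _ (Submodule.smul_mem _ _ (Submodule.mem_span_of_mem (by simp)))
    · exact Submodule.smul_mem _ _ (Submodule.smul_mem _ _ (Submodule.mem_span_of_mem (by simp)))
  rintro _ ⟨v, rfl⟩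
  rw [← homPart_add_homPart v, map_add]
  exact Submodule.add_mem _ (hmem (isHomogeneous_homPart _ _)) (hmem (isHomogeneous_homPart _ _))

end StemExtension

/-! ### The upper bound -/

lemma exists_hom_ker_eq_span_singleton [NeZero (2 : K)] {a : Bool} {ζ : A.carrier}
    (hζ : A.IsHomogeneous a ζ) (hc : ζ ∈ A.center) :
    ∃ (C : SuperLie K) (π : Hom A C), Surjective π.toLin ∧ LinearMap.ker π.toLin = K ∙ ζ := by
  have hJ : K ∙ ζ ≤ (K ∙ ζ).comap A.J := by
    rw [Submodule.span_singleton_le_iff_mem, Submodule.mem_comap, show A.J ζ = _ from hζ]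
    cases a <;> simp [Submodule.mem_span_singleton_self]
  have hI (x) (hx : x ∈ K ∙ ζ) (y) : A.br x y ∈ K ∙ ζ := by
    rw [mem_center.mp ((Submodule.span_singleton_le_iff_mem _ _).mpr hc hx)]
    exact zero_mem _
  exact ⟨_, quotientMk (K ∙ ζ) hJ hI, Submodule.mkQ_surjective _, Submodule.ker_mkQ _⟩

section CentralQuotient

variable [FiniteDimensional K A.carrier] {C : SuperLie K} {π : Hom A C} {ζ : A.carrier}
  (hπ : Surjective π.toLin) (hker : LinearMap.ker π.toLin = K ∙ ζ)
include hπ hker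

lemma finrank_add_one_of_ker_eq_span (hζ : ζ ≠ 0) :
    finrank K C.carrier + 1 = finrank K A.carrier := by
  rw [← π.finrank_add_finrank_ker hπ, hker, finrank_span_singleton hζ]

lemma finrank_derived_add_one_of_ker_eq_span (hζ : ζ ≠ 0) (hd : ζ ∈ A.derived) :
    finrank K C.derived + 1 = finrank K A.derived := by
  rw [← finrank_map_add_finrank_inf_ker π.toLin A.derived, π.map_derived hπ, hker,
    inf_eq_right.mpr ((Submodule.span_singleton_le_iff_mem _ _).mpr hd), finrank_span_singleton hζ]

lemma finrank_oddPart_add_toNat_le_of_ker_eq_span [NeZero (2 : K)] (hζ : ζ ≠ 0) {a : Bool}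
    (ha : A.IsHomogeneous a ζ) : finrank K C.oddPart + a.toNat ≤ finrank K A.oddPart := by
  rw [← finrank_map_add_finrank_inf_ker π.toLin A.oddPart, π.map_oddPart hπ, hker]
  refine Nat.add_le_add_left ?_ _
  cases a
  · exact Nat.zero_le _
  · rw [inf_eq_right.mpr ((Submodule.span_singleton_le_iff_mem _ _).mpr (mem_oddPart.mpr ha)),
      finrank_span_singleton hζ, Bool.toNat_true]

end CentralQuotient

lemma finrank_span_pair_le {V : Type*} [AddCommGroup V] [Module K V] (x y : V) :
    finrank K (Submodule.span K {x, y}) ≤ 2 := by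
  classical
  rw [← Finset.coe_pair]
  exact (finrank_span_finset_le_card _).trans Finset.card_le_two

lemma eq_span_singleton_of_finrank_eq_one {V : Type*} [AddCommGroup V] [Module K V]
    {S : Submodule K V} (hS : finrank K S = 1) {x : V} (hx : x ∈ S) (hx0 : x ≠ 0) :
    S = K ∙ x := by
  have := FiniteDimensional.of_finrank_eq_succ hS
  have hle : K ∙ x ≤ S := (Submodule.span_singleton_le_iff_mem _ _).mpr hx
  exact (Submodule.eq_of_le_of_finrank_eq hle (by rw [hS, finrank_span_singleton hx0])).symm

section Bound

variable [NeZero (2 : K)] {f : Hom B A} {z : B.carrier} {a : Bool}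

lemma IsStem.exists_range_br_le_span_pair (hf : IsStem f) (hz : B.IsHomogeneous a z)
    (hz0 : f.toLin z ≠ 0) (hd : A.derived = K ∙ f.toLin z) :
    ∃ b c x y, B.IsHomogeneous b x ∧ B.IsHomogeneous c y ∧ f.toLin (B.br x y) ≠ 0 ∧
      LinearMap.range (B.br z) ≤ Submodule.span K {B.br x z, B.br y z} := by
  obtain ⟨b, c, x, y, hx, hy, hxy⟩ := exists_isHomogeneous_br_ne_zero (A := A)
    (by rwa [hd, Ne, Submodule.span_singleton_eq_bot])
  obtain ⟨x, hx', rfl⟩ := exists_isHomogeneous_lift f.map_J hf.surjective hx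
  obtain ⟨y, hy', rfl⟩ := exists_isHomogeneous_lift f.map_J hf.surjective hy
  rw [← f.map_br] at hxy
  exact ⟨b, c, x, y, hx', hy', hxy, range_br_le_span_pair hf.ker_le_center hz hd.le hx' hy' hxy⟩

lemma IsNilpotent.exists_isHomogeneous_derived_eq_span (hA : A.IsNilpotent)
    (h1 : finrank K A.derived = 1) :
    ∃ a ζ, A.IsHomogeneous a ζ ∧ ζ ∈ A.center ∧ ζ ≠ 0 ∧ A.derived = K ∙ ζ := by
  have hne : A.derived ≠ ⊥ := by
    intro h
    rw [h, finrank_bot] at h1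
    contradiction
  obtain ⟨a, ζ, hζ, ha, h0⟩ := hA.exists_isHomogeneous_mem_center_inf_derived hne
  exact ⟨a, ζ, ha, hζ.1, h0, eq_span_singleton_of_finrank_eq_one h1 hζ.2 h0⟩

variable [FiniteDimensional K A.carrier]

lemma IsStem.finrank_range_br_le_two (hf : IsStem f) (hz : B.IsHomogeneous a z)
    (hz0 : f.toLin z ≠ 0) (hd : A.derived = K ∙ f.toLin z) :
    finrank K (LinearMap.range (B.br z)) ≤ 2 := by
  have := hf.finiteDimensional
  obtain ⟨_, _, x, y, -, -, -, hle⟩ := hf.exists_range_br_le_span_pair hz hz0 hd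
  exact (Submodule.finrank_mono hle).trans (finrank_span_pair_le _ _)

lemma IsStem.two_mul_finrank_ker_add_le_of_derived_eq_span (hf : IsStem f)
    (hz : B.IsHomogeneous a z) (hfz : f.toLin z ∈ A.center) (hz0 : f.toLin z ≠ 0)
    (hd : A.derived = K ∙ f.toLin z) :
    2 * finrank K (LinearMap.ker f.toLin) + 3 * finrank K A.carrier + 2 * a.toNat ≤
      finrank K A.carrier ^ 2 + 2 * finrank K A.oddPart
        + 2 * finrank K (LinearMap.range (B.br z)) := by
  have hzd : f.toLin z ∈ A.derived := hd ▸ Submodule.mem_span_singleton_self _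
  obtain ⟨C, π, hπ, hker⟩ := exists_hom_ker_eq_span_singleton (f.isHomogeneous hz) hfz
  have hC : FiniteDimensional K C.carrier := Module.Finite.of_surjective π.toLin hπ
  have hstep := hf.finrank_ker_add_one_le hz ⟨hfz, hzd⟩ hz0 hπ hker
  have hmult := two_mul_multDim_add_le C
  have hodd := finrank_oddPart_add_toNat_le_of_ker_eq_span hπ hker hz0 (f.isHomogeneous hz)
  rw [← finrank_add_one_of_ker_eq_span hπ hker hz0]
  nlinarith

lemma IsNilpotent.two_mul_multDim_le_of_finrank_derived_eq_one (hA : A.IsNilpotent)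
    (h1 : finrank K A.derived = 1) :
    2 * A.multDim + 3 * finrank K A.carrier ≤
      finrank K A.carrier ^ 2 + 2 * finrank K A.oddPart + 4 := by
  obtain ⟨a, ζ, ha, hc, h0, hd⟩ := hA.exists_isHomogeneous_derived_eq_span h1
  obtain ⟨B, f, hf, hdim⟩ := exists_isStem_finrank_ker_eq_multDim A
  obtain ⟨z, hz, rfl⟩ := exists_isHomogeneous_lift f.map_J hf.surjective ha
  have hbound := hf.two_mul_finrank_ker_add_le_of_derived_eq_span hz hc h0 hd
  have hrange := hf.finrank_range_br_le_two hz h0 hd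
  lia

lemma IsNilpotent.exists_hom_multDim_add_le (hA : A.IsNilpotent) (hne : A.derived ≠ ⊥) :
    ∃ (C : SuperLie K) (π : Hom A C), Surjective π.toLin ∧
      finrank K C.carrier + 1 = finrank K A.carrier ∧
      finrank K C.derived + 1 = finrank K A.derived ∧
      finrank K C.oddPart ≤ finrank K A.oddPart ∧
      A.multDim + 1 + finrank K A.derived ≤ C.multDim + finrank K A.carrier := by
  obtain ⟨a, ζ, hζ, ha, h0⟩ := hA.exists_isHomogeneous_mem_center_inf_derived hne
  obtain ⟨B, f, hf, hdim⟩ := exists_isStem_finrank_ker_eq_multDim A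
  obtain ⟨z, hz, rfl⟩ := exists_isHomogeneous_lift f.map_J hf.surjective ha
  obtain ⟨C, π, hπ, hker⟩ := exists_hom_ker_eq_span_singleton ha hζ.1
  have hodd := finrank_oddPart_add_toNat_le_of_ker_eq_span hπ hker h0 ha
  have hstep := hf.finrank_ker_add_one_le hz hζ h0 hπ hker
  have hrange := hf.finrank_range_br_add_finrank_derived_le hz hζ.1
  exact ⟨C, π, hπ, finrank_add_one_of_ker_eq_span hπ hker h0,
    finrank_derived_add_one_of_ker_eq_span hπ hker h0 hζ.2, by lia, by lia⟩

theorem IsNilpotent.two_mul_multDim_le {D : ℕ} (hD : 1 ≤ D) :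
    ∀ {A : SuperLie K} [FiniteDimensional K A.carrier], A.IsNilpotent → finrank K A.derived = D →
      2 * (A.multDim : ℤ) ≤ ((finrank K A.carrier : ℤ) + D - 2) * (finrank K A.carrier - D - 1)
        + 2 * finrank K A.oddPart + 2 := by
  induction D, hD using Nat.le_induction with
  | base =>
    intro A _ hA h1
    have := hA.two_mul_multDim_le_of_finrank_derived_eq_one h1
    push_cast
    zify at this
    linarith
  | succ D _ ih =>
    intro A _ hA hD'
    have hne : A.derived ≠ ⊥ := by
      intro h
      rw [h, finrank_bot] at hD'
      contradiction
    obtain ⟨C, π, hπ, hdim, hder, hodd, hstep⟩ := hA.exists_hom_multDim_add_le hne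
    have : FiniteDimensional K C.carrier := Module.Finite.of_surjective π.toLin hπ
    have hC := ih (π.isNilpotent hπ hA) (by lia)
    rw [hD'] at hstep
    rw [← hdim] at hstep ⊢
    zify at hstep hodd
    push_cast at hstep ⊢
    linarith

end Bound

/-! ### Equality in the upper bound -/

section Rigidity

variable [NeZero (2 : K)] {f : Hom B A} {z : B.carrier} {a b c : Bool}
  (hf : Surjective f.toLin) (hc : LinearMap.ker f.toLin ≤ B.center) (hz : B.IsHomogeneous a z)
  (hd : A.derived ≤ K ∙ f.toLin z) (h2 : finrank K (LinearMap.range (B.br z)) = 2)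

include hc hz hd h2

lemma linearIndependent_br_of_finrank_range_br {x y : B.carrier} (hx : B.IsHomogeneous b x)
    (hy : B.IsHomogeneous c y) (hxy : f.toLin (B.br x y) ≠ 0) :
    LinearIndependent K ![B.br x z, B.br y z] := by
  have := FiniteDimensional.span_of_finite K (Set.toFinite {B.br x z, B.br y z})
  rw [linearIndependent_iff_card_le_finrank_span, Set.finrank, Matrix.range_cons_cons_empty]
  exact h2.ge.trans (Submodule.finrank_mono (range_br_le_span_pair hc hz hd hx hy hxy))

lemma map_br_self_of_finrank_range_br {x : B.carrier} (hx : B.IsHomogeneous b x) :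
    f.toLin (B.br x x) = 0 := by
  by_contra hxx
  have hinj := (linearIndependent_br_of_finrank_range_br hc hz hd h2 hx hx hxx).injective
  exact absurd (hinj (a₁ := 0) (a₂ := 1) rfl) (by decide)

include hf

lemma map_mem_center_of_br_eq_zero {v : B.carrier} (hv : B.IsHomogeneous b v)
    (hvz : B.br v z = 0) : f.toLin v ∈ A.center := by
  have hzero {c : Bool} {w : B.carrier} (hw : B.IsHomogeneous c w) : f.toLin (B.br v w) = 0 := by
    by_contra hvw
    exact (linearIndependent_br_of_finrank_range_br hc hz hd h2 hv hw hvw).ne_zero 0 hvz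
  refine mem_center.mpr (hf.forall.mpr fun w => ?_)
  rw [← f.map_br, ← homPart_add_homPart w, map_add, map_add, hzero (isHomogeneous_homPart _ w),
    hzero (isHomogeneous_homPart _ w), add_zero]

lemma mem_center_of_br_eq_zero_of_br_eq_zero {x y u : A.carrier} {d : Bool}
    (hx : A.IsHomogeneous b x) (hy : A.IsHomogeneous c y) (hu : A.IsHomogeneous d u)
    (hxy : A.br x y = f.toLin z) (hyu : A.br y u = 0) (hux : A.br u x = 0) : u ∈ A.center := by
  obtain ⟨x, hx', rfl⟩ := exists_isHomogeneous_lift f.map_J hf hx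
  obtain ⟨y, hy', rfl⟩ := exists_isHomogeneous_lift f.map_J hf hy
  obtain ⟨u, hu', rfl⟩ := exists_isHomogeneous_lift f.map_J hf hu
  rw [← f.map_br] at hxy hyu hux
  have hjac := jacobi_lift (z := z) (r := (1 : K)) (s := 0) (t := 0) hc hu' hx' hy'
    (by rw [hxy, one_smul]) (by rw [hyu, zero_smul]) (by rw [hux, zero_smul])
  simp only [one_smul, zero_smul, smul_zero, add_zero] at hjac
  exact map_mem_center_of_br_eq_zero hf hc hz hd h2 hu'
    ((smul_eq_zero.mp hjac).resolve_left (koszulSign_ne_zero _ _))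

end Rigidity

lemma oddPart_le_center_of_br_self [NeZero (2 : K)] {ζ : A.carrier} (hζ : A.IsHomogeneous false ζ)
    (hd : A.derived ≤ K ∙ ζ) (hself : ∀ t, A.IsHomogeneous true t → A.br t t = 0) :
    A.oddPart ≤ A.center := by
  intro v hv
  rw [mem_oddPart] at hv
  refine mem_center.mpr fun w => ?_
  have heven : A.br v (A.homPart false w) = 0 := by
    refine IsHomogeneous.eq_zero_of_not ?_ (hv.br (isHomogeneous_homPart _ _))
    obtain ⟨t, ht⟩ := Submodule.mem_span_singleton.mp (hd (br_mem_derived v (A.homPart false w)))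
    exact ht ▸ hζ.smul t
  have hodd : A.br v (A.homPart true w) = 0 := by
    have hw := isHomogeneous_homPart true w
    have hpolar := hself _ (hv.add hw)
    rw [map_add, map_add, LinearMap.add_apply, LinearMap.add_apply, hself v hv, hself _ hw,
      zero_add, add_zero, A.skew_o _ _ hw hv, ← two_smul K] at hpolar
    exact (smul_eq_zero.mp hpolar).resolve_left two_ne_zero
  rw [← homPart_add_homPart w, map_add, heven, hodd, add_zero]

lemma span_range_coe_finBasis {V : Type*} [AddCommGroup V] [Module K V] (W : Submodule K V)
    [FiniteDimensional K W] :
    Submodule.span K (Set.range fun i => (finBasis K W i : V)) = W := by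
  rw [Set.range_comp' Subtype.val, ← Submodule.coe_subtype, Submodule.span_image, Basis.span_eq,
    Submodule.map_subtype_top]

section Heisenberg

variable [NeZero (2 : K)] {x y ζ : A.carrier} (hx : A.IsHomogeneous false x)
  (hy : A.IsHomogeneous false y) (hxy : A.br x y = ζ) (hd : A.derived ≤ K ∙ ζ)
  (hrad : ∀ u, A.IsHomogeneous false u → A.br x u = 0 → A.br y u = 0 → u ∈ A.center)

include hx hy hxy hd hrad

lemma evenPart_le_span_pair_sup_center :
    A.evenPart ≤ Submodule.span K {x, y} ⊔ A.center ⊓ A.evenPart := by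
  intro e he
  obtain ⟨p, hp⟩ := Submodule.mem_span_singleton.mp (hd (br_mem_derived x e))
  obtain ⟨q, hq⟩ := Submodule.mem_span_singleton.mp (hd (br_mem_derived y e))
  have hpair : p • y - q • x ∈ A.evenPart :=
    sub_mem (A.evenPart.smul_mem p (mem_evenPart.mpr hy))
      (A.evenPart.smul_mem q (mem_evenPart.mpr hx))
  have hu : e - (p • y - q • x) ∈ A.center ⊓ A.evenPart := by
    refine ⟨hrad _ (mem_evenPart.mp (sub_mem he hpair)) ?_ ?_, sub_mem he hpair⟩
    · simp only [map_sub, map_smul, hxy, hx.br_self, ← hp, smul_zero, sub_zero, sub_self]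
    · simp only [map_sub, map_smul, A.skew_e y x hy, hxy, hy.br_self, ← hq, smul_zero, smul_neg]
      abel
  rw [← add_sub_cancel (p • y - q • x) e]
  refine Submodule.add_mem_sup (sub_mem ?_ ?_) hu
  · exact Submodule.smul_mem _ _ (Submodule.mem_span_of_mem (by simp))
  · exact Submodule.smul_mem _ _ (Submodule.mem_span_of_mem (by simp))

lemma finrank_center_inf_evenPart_add_two [FiniteDimensional K A.carrier] (h0 : ζ ≠ 0) :
    finrank K ↥(A.center ⊓ A.evenPart) + 2 = finrank K A.evenPart := by
  have hcomb {s t : K} (h : s • x + t • y ∈ A.center) : s = 0 ∧ t = 0 := by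
    have hs := mem_center.mp h y
    have ht := br_eq_zero_of_mem_center h x
    simp_all [hy.br_self]
  have hind : LinearIndependent K ![x, y] :=
    LinearIndependent.pair_iff.mpr fun s t h => hcomb (h ▸ zero_mem _)
  have hdisj : Disjoint (Submodule.span K {x, y}) (A.center ⊓ A.evenPart) := by
    refine Submodule.disjoint_def.mpr fun w hw hwc => ?_
    obtain ⟨s, t, rfl⟩ := Submodule.mem_span_pair.mp hw
    obtain ⟨rfl, rfl⟩ := hcomb hwc.1
    simp
  have hsup : Submodule.span K {x, y} ⊔ A.center ⊓ A.evenPart = A.evenPart := by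
    refine le_antisymm (sup_le ?_ inf_le_right)
      (evenPart_le_span_pair_sup_center hx hy hxy hd hrad)
    rw [Submodule.span_le, Set.pair_subset_iff]
    exact ⟨mem_evenPart.mpr hx, mem_evenPart.mpr hy⟩
  have hdim := Submodule.finrank_sup_add_finrank_inf_eq (Submodule.span K {x, y})
    (A.center ⊓ A.evenPart)
  have hpair := finrank_span_eq_card hind
  rw [Matrix.range_cons_cons_empty, Fintype.card_fin] at hpair
  rw [hsup, hdisj.eq_bot, finrank_bot, hpair] at hdim
  lia

lemma exists_isHeisEvenSum_one_zero [FiniteDimensional K A.carrier] (hζ : ζ ∈ A.center)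
    (h0 : ζ ≠ 0) (hodd : A.oddPart ≤ A.center) :
    ∃ k, finrank K A.evenPart = k + 3 ∧ A.IsHeisEvenSum 1 0 k (finrank K A.oddPart) := by
  have hζe : A.IsHomogeneous false ζ := hxy ▸ hx.br hy
  obtain ⟨U, hdisj, hsup⟩ := IsModularLattice.exists_disjoint_and_sup_eq
    ((Submodule.span_singleton_le_iff_mem ζ (A.center ⊓ A.evenPart)).mpr
      ⟨hζ, mem_evenPart.mpr hζe⟩)
  have hU : U ≤ A.center ⊓ A.evenPart := hsup ▸ le_sup_right
  have hdim : finrank K A.evenPart = finrank K U + 3 := by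
    have h := Submodule.finrank_sup_add_finrank_inf_eq (K ∙ ζ) U
    rw [hsup, hdisj.eq_bot, finrank_bot, finrank_span_singleton h0] at h
    have := finrank_center_inf_evenPart_add_two hx hy hxy hd hrad h0
    lia
  let u := fun i => (finBasis K U i : A.carrier)
  let v := fun j => (finBasis K A.oddPart j : A.carrier)
  have htop : Submodule.span K (Set.range (Sum.elim ![x, y]
      (Sum.elim (Fin.elim0 : Fin 0 → A.carrier)
        (Sum.elim (fun _ : Fin 1 => ζ) (Sum.elim u v))))) = ⊤ := by
    simp only [Set.Sum.elim_range, Submodule.span_union, Matrix.range_cons_cons_empty,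
      Set.range_eq_empty, Submodule.span_empty, bot_sup_eq, Set.range_const, u, v,
      span_range_coe_finBasis]
    rw [← sup_assoc (K ∙ ζ), hsup, ← sup_assoc, eq_top_iff,
      ← A.isCompl_evenPart_oddPart.sup_eq_top]
    exact sup_le_sup_right (evenPart_le_span_pair_sup_center hx hy hxy hd hrad) _
  refine ⟨finrank K U, hdim, ![x, y], Fin.elim0, ζ, u, v, ?_, fun j => j.elim0,
    mem_evenPart.mpr hζe, fun i => (hU (finBasis K U i).2).2, fun j => (finBasis K _ j).2, ?_,
    htop, ?_, fun i => i.elim0, fun i j => j.elim0, hζ, fun i => (hU (finBasis K U i).2).1,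
    fun j => hodd (finBasis K _ j).2⟩
  · exact Fin.forall_fin_two.mpr ⟨mem_evenPart.mpr hx, mem_evenPart.mpr hy⟩
  · refine linearIndependent_of_top_le_span_of_card_eq_finrank htop.ge ?_
    rw [← A.finrank_evenPart_add_finrank_oddPart, hdim]
    simp only [Fintype.card_sum, Fintype.card_fin]
    lia
  · have hyx : A.br y x = -ζ := by rw [A.skew_e y x hy, hxy]
    refine Fin.forall_fin_two.mpr ⟨Fin.forall_fin_two.mpr ?_, Fin.forall_fin_two.mpr ?_⟩
    · simpa using ⟨hx.br_self, hxy⟩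
    · simpa using ⟨hyx, hy.br_self⟩

end Heisenberg

lemma exists_br_eq_of_oddPart_le_center [NeZero (2 : K)] {ζ : A.carrier} (hd : A.derived = K ∙ ζ)
    (h0 : ζ ≠ 0) (hodd : A.oddPart ≤ A.center) :
    ∃ x y, A.IsHomogeneous false x ∧ A.IsHomogeneous false y ∧ A.br x y = ζ := by
  obtain ⟨a, b, x, y, hx, hy, hxy⟩ := exists_isHomogeneous_br_ne_zero (A := A)
    (by rwa [hd, Ne, Submodule.span_singleton_eq_bot])
  obtain rfl : a = false := by
    by_contra ha
    rw [Bool.not_eq_false] at ha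
    exact hxy (mem_center.mp (hodd (mem_oddPart.mpr (ha ▸ hx))) y)
  obtain rfl : b = false := by
    by_contra hb
    rw [Bool.not_eq_false] at hb
    exact hxy (br_eq_zero_of_mem_center (hodd (mem_oddPart.mpr (hb ▸ hy))) x)
  obtain ⟨r, hr⟩ := Submodule.mem_span_singleton.mp (hd ▸ br_mem_derived x y)
  have hr0 : r ≠ 0 := by
    rintro rfl
    exact hxy (by rw [← hr, zero_smul])
  exact ⟨x, r⁻¹ • y, hx, hy.smul _, by rw [map_smul, ← hr, inv_smul_smul₀ hr0]⟩

theorem IsNilpotent.exists_isHeisEvenSum_one_zero [NeZero (2 : K)] [FiniteDimensional K A.carrier]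
    (hA : A.IsNilpotent) (h1 : finrank K A.derived = 1)
    (hM : 2 * A.multDim + 3 * finrank K A.carrier =
      finrank K A.carrier ^ 2 + 2 * finrank K A.oddPart + 4) :
    ∃ k, finrank K A.evenPart = k + 3 ∧ A.IsHeisEvenSum 1 0 k (finrank K A.oddPart) := by
  obtain ⟨a, ζ, ha, hc, h0, hd⟩ := hA.exists_isHomogeneous_derived_eq_span h1
  obtain ⟨B, f, hf, hdim⟩ := exists_isStem_finrank_ker_eq_multDim A
  obtain ⟨z, hz, rfl⟩ := exists_isHomogeneous_lift f.map_J hf.surjective ha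
  have hbound := hf.two_mul_finrank_ker_add_le_of_derived_eq_span hz hc h0 hd
  have hrange := hf.finrank_range_br_le_two hz h0 hd
  obtain rfl : a = false := Bool.toNat_eq_zero.mp (by lia)
  have h2 : finrank K (LinearMap.range (B.br z)) = 2 := by lia
  have hodd : A.oddPart ≤ A.center := by
    refine oddPart_le_center_of_br_self ha hd.le fun t ht => ?_
    obtain ⟨t, ht', rfl⟩ := exists_isHomogeneous_lift f.map_J hf.surjective ht
    rw [← f.map_br, map_br_self_of_finrank_range_br hf.ker_le_center hz hd.le h2 ht']
  obtain ⟨x, y, hx, hy, hxy⟩ := exists_br_eq_of_oddPart_le_center hd h0 hodd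
  refine SuperLie.exists_isHeisEvenSum_one_zero hx hy hxy hd.le (fun u hu hxu hyu => ?_) hc h0 hodd
  refine mem_center_of_br_eq_zero_of_br_eq_zero hf.surjective hf.ker_le_center hz hd.le h2 hx hy hu
    hxy hyu ?_
  rw [A.skew_e u x hu, hxu, neg_zero]

/-! ### Cocycles and central extensions -/

/-- The linear forms of parity `a`. -/
def IsHomogeneousDual (A : SuperLie K) (a : Bool) (φ : Dual K A.carrier) : Prop :=
  ∀ x, φ (A.J x) = if a then -φ x else φ x

/-- The 2-cocycles of parity `d` with values in the ground field. -/
structure IsCocycle (A : SuperLie K) (d : Bool) (θ : A.carrier →ₗ[K] A.carrier →ₗ[K] K) :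
    Prop where
  map_J : ∀ x y, θ (A.J x) (A.J y) = if d then -θ x y else θ x y
  skew_e : ∀ x y, A.IsHomogeneous false x → θ x y = -θ y x
  skew_o : ∀ x y, A.IsHomogeneous true x → A.IsHomogeneous true y → θ x y = θ y x
  jacobi : ∀ a b c x y z, A.IsHomogeneous a x → A.IsHomogeneous b y → A.IsHomogeneous c z →
    koszulSign K a c * θ x (A.br y z) + koszulSign K b a * θ y (A.br z x)
      + koszulSign K c b * θ z (A.br x y) = 0

lemma IsCocycle.neg {d : Bool} {θ : A.carrier →ₗ[K] A.carrier →ₗ[K] K} (h : IsCocycle A d θ) :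
    IsCocycle A d (-θ) where
  map_J x y := by cases d <;> simp [h.map_J]
  skew_e x y hx := by simp [h.skew_e x y hx]
  skew_o x y hx hy := by simp [h.skew_o x y hx hy]
  jacobi a b c x y z hx hy hz := by
    simpa [neg_add_rev, add_comm, add_left_comm] using
      congrArg Neg.neg (h.jacobi a b c x y z hx hy hz)

section CentralExtension

variable {κ : Type} {σ : κ → Bool} {θ : κ → A.carrier →ₗ[K] A.carrier →ₗ[K] K}
  (h : ∀ k, IsCocycle A (σ k) (θ k))

/-- The central extension of `A` defined by a family of cocycles, the `k`-th central coordinate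
having the parity of the `k`-th cocycle. -/
def centralExtension : SuperLie K where
  carrier := A.carrier × (κ → K)
  J := A.J.prodMap (LinearMap.pi fun k => (if σ k then (-1 : K) else 1) • LinearMap.proj k)
  br := LinearMap.mk₂ K (fun u v => (A.br u.1 v.1, fun k => θ k u.1 v.1))
    (fun _ _ _ => by ext <;> simp) (fun _ _ _ => by ext <;> simp)
    (fun _ _ _ => by ext <;> simp) (fun _ _ _ => by ext <;> simp)
  J_inv u := by
    ext k
    · exact A.J_inv u.1
    · cases hk : σ k <;> simp [hk]
  J_br u v := by
    ext k
    · exact A.J_br u.1 v.1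
    · cases hk : σ k <;> simp [hk, (h k).map_J]
  skew_e u v hu := by
    ext k
    · exact A.skew_e u.1 v.1 (congrArg Prod.fst hu)
    · exact (h k).skew_e u.1 v.1 (congrArg Prod.fst hu)
  skew_o u v hu hv := by
    ext k
    · exact A.skew_o u.1 v.1 (congrArg Prod.fst hu) (congrArg Prod.fst hv)
    · exact (h k).skew_o u.1 v.1 (congrArg Prod.fst hu) (congrArg Prod.fst hv)
  jacobi a b c u v w hu hv hw := by
    have hfst {a : Bool} {u : A.carrier × (κ → K)}
        (hu : (A.J.prodMap (LinearMap.pi fun k =>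
          (if σ k then (-1 : K) else 1) • LinearMap.proj k)) u = if a then -u else u) :
        A.IsHomogeneous a u.1 := by
      cases a <;> exact congrArg Prod.fst hu
    ext k
    · exact A.jacobi a b c u.1 v.1 w.1 (hfst hu) (hfst hv) (hfst hw)
    · exact (h k).jacobi a b c u.1 v.1 w.1 (hfst hu) (hfst hv) (hfst hw)

/-- The projection of a central extension onto the extended superalgebra. -/
def centralExtensionFst : Hom (centralExtension h) A where
  toLin := LinearMap.fst K A.carrier (κ → K)
  map_J _ := rfl
  map_br _ _ := rfl

/-- The inclusion of the central coordinates into a central extension. -/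
def centralExtensionInr : (κ → K) →ₗ[K] (centralExtension h).carrier :=
  LinearMap.inr K A.carrier (κ → K)

lemma ker_centralExtensionFst :
    LinearMap.ker (centralExtensionFst h).toLin = LinearMap.range (centralExtensionInr h) :=
  LinearMap.ker_fst K A.carrier (κ → K)

lemma centralExtensionInr_single_mem_derived [DecidableEq κ] {k : κ} {x y : A.carrier}
    (hxy : A.br x y = 0) (hne : θ k x y ≠ 0) (hoff : ∀ l, l ≠ k → θ l x y = 0) (t : K) :
    centralExtensionInr h (Pi.single k t) ∈ (centralExtension h).derived := by
  convert br_mem_derived (A := centralExtension h) ((t / θ k x y) • x, 0) (y, 0) using 1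
  refine Prod.ext ?_ (funext fun l => ?_)
  · change 0 = A.br ((t / θ k x y) • x) y
    rw [LinearMap.map_smul₂, hxy, smul_zero]
  · change (Pi.single k t : κ → K) l = θ l ((t / θ k x y) • x) y
    rw [LinearMap.map_smul₂, smul_eq_mul]
    obtain rfl | hl := eq_or_ne l k
    · rw [Pi.single_eq_same, div_mul_cancel₀ _ hne]
    · rw [Pi.single_eq_of_ne hl, hoff l hl, mul_zero]

lemma isStem_centralExtensionFst [Finite κ]
    (hθ : ∀ k, ∃ x y, A.br x y = 0 ∧ θ k x y ≠ 0 ∧ ∀ l, l ≠ k → θ l x y = 0) :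
    IsStem (centralExtensionFst h) where
  surjective := LinearMap.fst_surjective
  ker_le_center := by
    rw [ker_centralExtensionFst]
    rintro _ ⟨c, rfl⟩
    refine mem_center.mpr fun v => Prod.ext ?_ (funext fun k => ?_)
    · exact LinearMap.map_zero₂ A.br v.1
    · exact LinearMap.map_zero₂ (θ k) v.1
  ker_le_derived := by
    classical
    have := Fintype.ofFinite κ
    rw [ker_centralExtensionFst]
    rintro _ ⟨c, rfl⟩
    rw [← Finset.univ_sum_single c, map_sum]
    refine Submodule.sum_mem _ fun k _ => ?_
    obtain ⟨x, y, hxy, hne, hoff⟩ := hθ k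
    exact centralExtensionInr_single_mem_derived h hxy hne hoff _

include h in
lemma card_le_multDim_of_isCocycle [NeZero (2 : K)] [FiniteDimensional K A.carrier] [Fintype κ]
    (hθ : ∀ k, ∃ x y, A.br x y = 0 ∧ θ k x y ≠ 0 ∧ ∀ l, l ≠ k → θ l x y = 0) :
    Fintype.card κ ≤ A.multDim := by
  have hinj : Injective (centralExtensionInr h) := LinearMap.inr_injective
  rw [← finrank_fintype_fun_eq_card K, ← LinearMap.finrank_range_of_inj hinj,
    ← ker_centralExtensionFst]
  exact (isStem_centralExtensionFst h hθ).finrank_ker_le_multDim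

end CentralExtension

/-- The bilinear form `φ x * ψ y - ε * ψ x * φ y`. For forms of parities `a` and `b` and
`ε = (-1)^(ab)` it is their wedge product in the graded sense. -/
def wedge (ε : K) (φ ψ : Dual K A.carrier) : A.carrier →ₗ[K] A.carrier →ₗ[K] K :=
  φ.smulRight ψ - ε • ψ.smulRight φ

lemma wedge_apply (ε : K) (φ ψ : Dual K A.carrier) (x y : A.carrier) :
    wedge ε φ ψ x y = φ x * ψ y - ε * (ψ x * φ y) := by
  simp [wedge]

lemma wedge_one_swap (φ ψ : Dual K A.carrier) : wedge 1 ψ φ = -wedge 1 φ ψ := by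
  ext
  simp [wedge_apply]

lemma IsHomogeneousDual.eq_zero [NeZero (2 : K)] {a b : Bool} {φ : Dual K A.carrier}
    {x : A.carrier} (hφ : A.IsHomogeneousDual a φ) (hx : A.IsHomogeneous b x) (hab : a ≠ b) :
    φ x = 0 := by
  have h := hφ x
  rw [show A.J x = _ from hx] at h
  refine eq_zero_of_eq_neg (K := K) ?_
  cases a <;> cases b
  · exact absurd rfl hab
  · simpa using h.symm
  · simpa using h
  · exact absurd rfl hab

lemma isHomogeneousDual_coord {κ : Type*} {b : Basis κ K A.carrier} {o : κ → Bool}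
    (ho : ∀ i, A.IsHomogeneous (o i) (b i)) (i : κ) : A.IsHomogeneousDual (o i) (b.coord i) := by
  classical
  have h : b.coord i ∘ₗ A.J = (if o i then (-1 : K) else 1) • b.coord i := by
    refine b.ext fun j => ?_
    rw [LinearMap.comp_apply, show A.J (b j) = _ from ho j]
    obtain rfl | hij := eq_or_ne j i
    · cases o j <;> simp
    · cases o j <;> cases o i <;> simp [hij]
  intro x
  rw [← LinearMap.comp_apply, h]
  cases o i <;> simp

section Wedge

variable [NeZero (2 : K)] {a b : Bool} {φ ψ : Dual K A.carrier}

lemma isCocycle_wedge_of_jacobi (hφ : A.IsHomogeneousDual a φ) (hψ : A.IsHomogeneousDual b ψ)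
    (hjac : ∀ a' b' c' x y z,
      A.IsHomogeneous a' x → A.IsHomogeneous b' y → A.IsHomogeneous c' z →
      koszulSign K a' c' * wedge (koszulSign K a b) φ ψ x (A.br y z)
        + koszulSign K b' a' * wedge (koszulSign K a b) φ ψ y (A.br z x)
        + koszulSign K c' b' * wedge (koszulSign K a b) φ ψ z (A.br x y) = 0) :
    IsCocycle A (a ^^ b) (wedge (koszulSign K a b) φ ψ) where
  map_J x y := by
    simp only [wedge_apply, hφ x, hφ y, hψ x, hψ y]
    cases a <;> cases b <;> simp <;> ring
  skew_e x y hx := by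
    have hφx (ha : a = true) : φ x = 0 := hφ.eq_zero hx (by simp [ha])
    have hψx (hb : b = true) : ψ x = 0 := hψ.eq_zero hx (by simp [hb])
    cases a <;> cases b <;> simp [wedge_apply, koszulSign, hφx, hψx] <;> ring
  skew_o x y hx hy := by
    have hφ₀ (ha : a = false) : φ x = 0 ∧ φ y = 0 :=
      ⟨hφ.eq_zero hx (by simp [ha]), hφ.eq_zero hy (by simp [ha])⟩
    have hψ₀ (hb : b = false) : ψ x = 0 ∧ ψ y = 0 :=
      ⟨hψ.eq_zero hx (by simp [hb]), hψ.eq_zero hy (by simp [hb])⟩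
    cases a <;> cases b <;> simp [wedge_apply, koszulSign, hφ₀, hψ₀]
    ring
  jacobi := hjac

lemma isCocycle_wedge (hφ : A.IsHomogeneousDual a φ) (hψ : A.IsHomogeneousDual b ψ)
    (hφ' : ∀ x y, φ (A.br x y) = 0) (hψ' : ∀ x y, ψ (A.br x y) = 0) :
    IsCocycle A (a ^^ b) (wedge (koszulSign K a b) φ ψ) :=
  isCocycle_wedge_of_jacobi hφ hψ fun _ _ _ x y z _ _ _ => by simp [wedge_apply, hφ', hψ']

/-- If `dγ = α ∧ β` then `d(γ ∧ ξ) = α ∧ β ∧ ξ`, which vanishes for `ξ ∈ {α, β}`. -/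
lemma isCocycle_wedge_of_br_eq_wedge {α β γ ξ : Dual K A.carrier}
    (hα : A.IsHomogeneousDual false α) (hβ : A.IsHomogeneousDual false β)
    (hγ : A.IsHomogeneousDual false γ) (hξ : ξ = α ∨ ξ = β)
    (hγ' : ∀ x y, γ (A.br x y) = wedge 1 α β x y) (hξ' : ∀ x y, ξ (A.br x y) = 0) :
    IsCocycle A false (wedge 1 γ ξ) := by
  have hξ₀ : A.IsHomogeneousDual false ξ := by
    obtain rfl | rfl := hξ
    exacts [hα, hβ]
  refine isCocycle_wedge_of_jacobi (a := false) (b := false) hγ hξ₀ fun a b c x y z hx hy hz => ?_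
  have hodd {a : Bool} {x : A.carrier} (hx : A.IsHomogeneous a x) (ha : a = true) :
      α x = 0 ∧ β x = 0 :=
    ⟨hα.eq_zero hx (by simp [ha]), hβ.eq_zero hx (by simp [ha])⟩
  have hx₀ := hodd hx
  have hy₀ := hodd hy
  have hz₀ := hodd hz
  simp only [wedge_apply, hξ', hγ']
  obtain rfl | rfl := hξ <;> cases a <;> cases b <;> cases c <;>
    simp_all [koszulSign] <;> ring

end Wedge

/-! ### The multiplier of `H(1,0) ⊕ A(a|b)` -/

section Basis

variable {κ : Type} {b : Basis κ K A.carrier} {o : κ → Bool}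

lemma wedge_coord_apply_self [NeZero (2 : K)] {p : κ × κ} (hp : p.1 = p.2 → o p.1) :
    wedge (koszulSign K (o p.1) (o p.2)) (b.coord p.1) (b.coord p.2) (b p.1) (b p.2) ≠ 0 := by
  obtain ⟨i, j⟩ := p
  obtain rfl | hij := eq_or_ne i j
  · have hi : o i = true := hp rfl
    simp [wedge_apply, koszulSign, hi, one_add_one_eq_two, two_ne_zero]
  · simp [wedge_apply, hij, hij.symm]

lemma wedge_coord_apply_of_ne {ε : K} {i j k l : κ} (h : s(k, l) ≠ s(i, j)) :
    wedge ε (b.coord i) (b.coord j) (b k) (b l) = 0 := by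
  classical
  obtain ⟨h, h'⟩ := not_or.mp (mt Sym2.eq_iff.mpr h)
  simp only [wedge_apply, Basis.coord_apply, Basis.repr_self, Finsupp.single_apply]
  grind

lemma card_le_multDim_of_basis [NeZero (2 : K)] [FiniteDimensional K A.carrier]
    {P : Finset (κ × κ)} (hP : Set.InjOn (fun p : κ × κ => s(p.1, p.2)) P)
    (hdiag : ∀ p ∈ P, p.1 = p.2 → o p.1) (hbr : ∀ p ∈ P, A.br (b p.1) (b p.2) = 0)
    (hcoc : ∀ p ∈ P, IsCocycle A (o p.1 ^^ o p.2)
      (wedge (koszulSign K (o p.1) (o p.2)) (b.coord p.1) (b.coord p.2))) :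
    P.card ≤ A.multDim := by
  rw [← Fintype.card_coe]
  refine card_le_multDim_of_isCocycle (fun p : P => hcoc p p.2) fun p =>
    ⟨b p.1.1, b p.1.2, hbr p p.2, wedge_coord_apply_self (hdiag p p.2), fun q hq => ?_⟩
  exact wedge_coord_apply_of_ne fun h => hq (Subtype.ext (hP p.2 q.2 h)).symm

end Basis

section Heisenberg

variable {κ : Type} {b : Basis κ K A.carrier} {o : κ → Bool} {i j k : κ}
  (ho : ∀ l, A.IsHomogeneous (o l) (b l)) (hi : o i = false) (hj : o j = false)
  (hk : o k = false) (hij : i ≠ j) (hik : i ≠ k) (hjk : j ≠ k) (hbr : A.br (b i) (b j) = b k)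
  (hbr' : ∀ l l', s(l, l') ≠ s(i, j) → A.br (b l) (b l') = 0)

include ho hi hij hbr hbr' in
lemma br_eq_wedge_smul (x y : A.carrier) :
    A.br x y = wedge 1 (b.coord i) (b.coord j) x y • b k := by
  have h : A.br =
      (wedge 1 (b.coord i) (b.coord j)).compr₂ (LinearMap.toSpanSingleton K _ (b k)) := by
    refine b.ext fun l => b.ext fun l' => ?_
    rw [LinearMap.compr₂_apply, LinearMap.toSpanSingleton_apply]
    by_cases hl : s(l, l') = s(i, j)
    · obtain ⟨rfl, rfl⟩ | ⟨rfl, rfl⟩ := Sym2.eq_iff.mp hl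
      · simp [wedge_apply, hbr, hij, hij.symm]
      · have heven : A.IsHomogeneous false (b l') := hi ▸ ho l'
        have hskew : A.br (b l) (b l') = -b k := by rw [← hbr, A.skew_e _ _ heven, neg_neg]
        simp [wedge_apply, hskew, hij, hij.symm]
    · rw [hbr' l l' hl, wedge_coord_apply_of_ne hl, zero_smul]
  rw [h]
  rfl

include ho hi hj hk hij hik hjk hbr hbr' in
lemma isCocycle_wedge_coord [NeZero (2 : K)] {l l' : κ} (hl : l = k → l' = i ∨ l' = j)
    (hl' : l' = k → l = i ∨ l = j) :
    IsCocycle A (o l ^^ o l') (wedge (koszulSign K (o l) (o l')) (b.coord l) (b.coord l')) := by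
  have hbr_eq := br_eq_wedge_smul ho hi hij hbr hbr'
  have hcoord {l : κ} (hl : l ≠ k) (x y : A.carrier) : b.coord l (A.br x y) = 0 := by
    simp [hbr_eq, hl.symm]
  have hdual := isHomogeneousDual_coord ho
  have hcentral {l : κ} (hl : l = i ∨ l = j) :
      o l = false ∧ IsCocycle A false (wedge 1 (b.coord k) (b.coord l)) := by
    refine ⟨by obtain rfl | rfl := hl <;> assumption,
      isCocycle_wedge_of_br_eq_wedge (hi ▸ hdual i) (hj ▸ hdual j) (hk ▸ hdual k)
      (hl.imp (congrArg b.coord) (congrArg b.coord)) (fun x y => by simp [hbr_eq]) (hcoord ?_)⟩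
    obtain rfl | rfl := hl <;> assumption
  by_cases hlk : l = k
  · obtain ⟨h, hcoc⟩ := hcentral (hl hlk)
    simpa [hlk, hk, h, koszulSign] using hcoc
  by_cases hlk' : l' = k
  · obtain ⟨h, hcoc⟩ := hcentral (hl' hlk')
    simpa [hlk', hk, h, koszulSign, wedge_one_swap (b.coord k)] using hcoc.neg
  · exact isCocycle_wedge (hdual l) (hdual l') (hcoord hlk) (hcoord hlk')

include ho hi hj hk hij hik hjk hbr hbr' in
lemma le_two_mul_multDim_of_basis [NeZero (2 : K)] [FiniteDimensional K A.carrier] [Fintype κ]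
    [LinearOrder κ] :
    Fintype.card κ ^ 2 + 2 * (Finset.univ.filter fun l => o l = true).card + 4 ≤
      2 * A.multDim + 3 * Fintype.card κ := by
  let C : Finset κ := Finset.univ \ {i, j, k}
  let bad : Finset (Sym2 κ) := insert s(i, j) (C.image fun l => s(k, l))
  have hC : C.card + 3 = Fintype.card κ := by
    rw [← Finset.card_eq_three.mpr ⟨i, j, k, hij, hik, hjk, rfl⟩, ← Finset.card_univ]
    exact Finset.card_sdiff_add_card_eq_card (Finset.subset_univ _)
  have hbad : bad.card ≤ C.card + 1 :=
    (Finset.card_insert_le _ _).trans (Nat.add_le_add_right Finset.card_image_le 1)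
  let P := (gradedPairs o).filter fun p => s(p.1, p.2) ∉ bad
  have hbr_zero {p : κ × κ} (hp : p ∈ P) : A.br (b p.1) (b p.2) = 0 :=
    hbr' _ _ fun h => (Finset.mem_filter.mp hp).2 (h ▸ Finset.mem_insert_self _ _)
  have hdiag {p : κ × κ} (hp : p ∈ P) : p.1 = p.2 → o p.1 :=
    odd_of_mem_gradedPairs (Finset.mem_filter.mp hp).1
  have hoff {p : κ × κ} (hp : p ∈ P) {l : κ} (h : s(p.1, p.2) = s(k, l)) : l = i ∨ l = j := by
    by_contra hl
    have hlk : l ≠ k := by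
      rintro rfl
      obtain ⟨h₁, h₂⟩ : p.1 = l ∧ p.2 = l := by simpa [Prod.ext_iff] using h
      simpa [h₁, hk] using hdiag hp (h₁.trans h₂.symm)
    refine (Finset.mem_filter.mp hp).2 (h ▸ Finset.mem_insert_of_mem ?_)
    exact Finset.mem_image_of_mem _ (by simp_all [C])
  have hP : P.card ≤ A.multDim :=
    card_le_multDim_of_basis
      (mk_injOn_gradedPairs.mono fun p hp => (Finset.mem_filter.mp hp).1)
      (fun p => hdiag) (fun p => hbr_zero) fun p hp =>
        isCocycle_wedge_coord ho hi hj hk hij hik hjk hbr hbr'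
          (fun h => hoff hp (by rw [h])) fun h => hoff hp (by rw [h, Sym2.eq_swap])
  have hcard : (gradedPairs o).card ≤ P.card + bad.card := card_gradedPairs_le_add bad
  have := two_mul_card_gradedPairs o
  lia

lemma IsHeisEvenSum.exists_basis [NeZero (2 : K)] {a n : ℕ} (hA : A.IsHeisEvenSum 1 0 a n) :
    ∃ b : Basis (Fin 2 ⊕ Fin 1 ⊕ Fin a ⊕ Fin n) K A.carrier,
      (∀ l, A.IsHomogeneous
        (Sum.elim (fun _ => false) (Sum.elim (fun _ => false) Sum.isRight) l) (b l)) ∧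
      A.br (b (Sum.inl 0)) (b (Sum.inl 1)) = b (Sum.inr (Sum.inl 0)) ∧
      ∀ l l', s(l, l') ≠ s(Sum.inl 0, Sum.inl 1) → A.br (b l) (b l') = 0 := by
  obtain ⟨x, y, z, u, v, hx, -, hz, hu, hv, hli, hsp, hxx, -, -, hzc, huc, hvc⟩ := hA
  let b := (Basis.mk hli hsp.ge).reindex ((Equiv.refl (Fin 2)).sumCongr (Equiv.emptySum _ _))
  have hb : ⇑b = Sum.elim x (Sum.elim (fun _ => z) (Sum.elim u v)) := by
    ext (l | l | l | l) <;> simp [b]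
  have hcentral : ∀ l : Fin 1 ⊕ Fin a ⊕ Fin n, b (Sum.inr l) ∈ A.center := by
    rintro (l | l | l)
    · simpa [hb] using hzc
    · simpa [hb] using huc l
    · simpa [hb] using hvc l
  refine ⟨b, ?_, by simp [hb, hxx], ?_⟩
  · rintro (l | l | l | l)
    · simpa [hb] using mem_evenPart.mp (hx l)
    · simpa [hb] using mem_evenPart.mp hz
    · simpa [hb] using mem_evenPart.mp (hu l)
    · simpa [hb] using mem_oddPart.mp (hv l)
  · rintro (l | l) (l' | l') h
    · rw [hb, Sum.elim_inl, Sum.elim_inl, hxx]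
      fin_cases l <;> fin_cases l' <;> simp_all [Sym2.eq_swap]
    · exact br_eq_zero_of_mem_center (hcentral l') _
    · exact mem_center.mp (hcentral l) _
    · exact mem_center.mp (hcentral l) _

lemma IsHeisEvenSum.le_two_mul_multDim [NeZero (2 : K)] [FiniteDimensional K A.carrier] {a n : ℕ}
    (hA : A.IsHeisEvenSum 1 0 a n) :
    (a + 3 + n) ^ 2 + 2 * n + 4 ≤ 2 * A.multDim + 3 * (a + 3 + n) := by
  obtain ⟨b, ho, hbr, hbr'⟩ := hA.exists_basis
  let _ : LinearOrder (Fin 2 ⊕ Fin 1 ⊕ Fin a ⊕ Fin n) :=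
    LinearOrder.lift' (Fintype.equivFin _) (Equiv.injective _)
  have hle := le_two_mul_multDim_of_basis ho rfl rfl rfl (by simp) (by simp) (by simp) hbr hbr'
  have hcard : Fintype.card (Fin 2 ⊕ Fin 1 ⊕ Fin a ⊕ Fin n) = a + 3 + n := by
    simp only [Fintype.card_sum, Fintype.card_fin]
    lia
  rw [hcard, Finset.card_filter] at hle
  simp only [Fintype.sum_sum_type] at hle
  simpa using hle

end Heisenberg

theorem IsNilpotent.two_mul_multDim_eq_iff_isHeisEvenSum [NeZero (2 : K)]
    [FiniteDimensional K A.carrier] (hA : A.IsNilpotent) (h1 : finrank K A.derived = 1) :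
    2 * A.multDim + 3 * finrank K A.carrier =
        finrank K A.carrier ^ 2 + 2 * finrank K A.oddPart + 4 ↔
      ∃ k, finrank K A.evenPart = k + 3 ∧ A.IsHeisEvenSum 1 0 k (finrank K A.oddPart) := by
  refine ⟨hA.exists_isHeisEvenSum_one_zero h1, ?_⟩
  rintro ⟨k, hk, hH⟩
  refine le_antisymm (hA.two_mul_multDim_le_of_finrank_derived_eq_one h1) ?_
  rw [← A.finrank_evenPart_add_finrank_oddPart, hk]
  exact hH.le_two_mul_multDim

end SuperLie

theorem stmt19_general {K : Type} [Field K] (h2 : (2 : K) ≠ 0)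
    (A : SuperLie K) [FiniteDimensional K A.carrier] (hnil : A.IsNilpotent)
    (m n r s : ℕ) (hm : m = finrank K A.evenPart) (hn : n = finrank K A.oddPart)
    (hr : r = finrank K ↥(A.derived ⊓ A.evenPart))
    (hs : s = finrank K ↥(A.derived ⊓ A.oddPart))
    (hrs : 1 ≤ r + s) :
    2 * (A.multDim : ℤ) ≤
      ((m : ℤ) + n + r + s - 2) * ((m : ℤ) + n - r - s - 1) + 2 * n + 2 ∧
    (r + s = 1 →
      (2 * (A.multDim : ℤ) =
          ((m : ℤ) + n + r + s - 2) * ((m : ℤ) + n - r - s - 1) + 2 * n + 2 ↔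
        ∃ a : ℕ, m = a + 3 ∧ A.IsHeisEvenSum 1 0 a n)) := by
  have : NeZero (2 : K) := ⟨h2⟩
  have hN : finrank K A.carrier = m + n := by
    rw [hm, hn, A.finrank_evenPart_add_finrank_oddPart]
  have hD : finrank K A.derived = r + s := by
    rw [hr, hs, finrank_inf_evenPart_add_finrank_inf_oddPart derived_le_comap_J]
  have hle := hnil.two_mul_multDim_le hrs hD
  rw [hN, ← hn] at hle
  push_cast at hle
  refine ⟨by linarith, fun hrs₁ => ?_⟩
  have hiff := hnil.two_mul_multDim_eq_iff_isHeisEvenSum (hD.trans hrs₁)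
  rw [hN, ← hm, ← hn] at hiff
  have hadd : (m : ℤ) + n + r + s = m + n + 1 := by lia
  have hsub : (m : ℤ) + n - r - s = m + n - 1 := by lia
  rw [← hiff, hadd, hsub]
  zify
  constructor <;> intro heq <;> linarith

/-- For a nilpotent Lie superalgebra of dimension `(m|n)` with
`dim L' = (r|s)`, `r + s ≥ 1`,
`dim M(L) ≤ ½(m+n+r+s-2)(m+n-r-s-1) + n + 1`, and for `r+s = 1` equality holds
iff `L ≅ H(1,0) ⊕ A(m-3|n)`. (Stated multiplied by `2` in `ℤ`.) -/
theorem stmt19 {K : Type} [Field K] (h2 : (2 : K) ≠ 0) (h3 : (3 : K) ≠ 0)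
    (A : SuperLie K) [FiniteDimensional K A.carrier] (hnil : A.IsNilpotent)
    (m n r s : ℕ) (hm : m = finrank K A.evenPart) (hn : n = finrank K A.oddPart)
    (hr : r = finrank K ↥(A.derived ⊓ A.evenPart))
    (hs : s = finrank K ↥(A.derived ⊓ A.oddPart))
    (hrs : 1 ≤ r + s) :
    2 * (A.multDim : ℤ) ≤
      ((m : ℤ) + n + r + s - 2) * ((m : ℤ) + n - r - s - 1) + 2 * n + 2 ∧
    (r + s = 1 →
      (2 * (A.multDim : ℤ) =
          ((m : ℤ) + n + r + s - 2) * ((m : ℤ) + n - r - s - 1) + 2 * n + 2 ↔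
        ∃ a : ℕ, m = a + 3 ∧ A.IsHeisEvenSum 1 0 a n)) :=
  stmt19_general h2 A hnil m n r s hm hn hr hs hrs
end
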